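/- Let I ⊆ ℂ[Mat_{m,n}] be a Knutson determinantal ideal: a contiguous determinantal ideal generated by the set 𝒢 of all d_i×d_i minors of submatrices U_i of the generic matrix Z, where each U_i has one of the four forms [1,a']×[1,b'] (northwest-justified), [a,m]×[b,n] (southeast-justified), [1,m]×[b,b'] (consecutive columns), or [a,a']×[1,n] (consecutive rows). Let ≺ be the antidiagonal lexicographic term order determined by the variable order z_{1n} ≻ z_{1,n−1} ≻ … ≻ z_{11} ≻ z_{2n} ≻ … ≻ z_{m1}. Then 𝒢 is a Gröbner basis for I with respect to ≺ (so I is Gröbner-determinantal), and consequently I is (𝐈,𝐉,≺)-bicrystalline for every Levi datum (𝐈,𝐉) such that I is L_𝐈×L_𝐉-stable. -/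

import Mathlib

namespace GCS

/-- Given a labelled word whose letter `cl` plays the role of a closing bracket `)` and
whose letter `op` plays the role of an opening bracket `(`, with `o` the number of currently
unmatched opening brackets seen so far, return the label of the rightmost unmatched
closing bracket (or `none` if every closing bracket is matched). -/
def lastUnmatched {β : Type} (cl op : ℕ) : List (ℕ × β) → ℕ → Option β
  | [], _ => none
  | (a, lbl) :: rest, o =>
    if a = cl then
      if o = 0 then
        match lastUnmatched cl op rest 0 with
        | some x => some x
        | none => some lbl
      else lastUnmatched cl op rest (o - 1)
    else if a = op then lastUnmatched cl op rest (o + 1)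
    else lastUnmatched cl op rest o

variable {m n : ℕ}

/-- The labelled row word of a matrix of nonnegative integers: read the columns left to
right, each column top to bottom, recording `M r c` copies of the (1-based) row index
`r + 1`, each labelled by its column `c`. -/
def rowWordLbl (M : Matrix (Fin m) (Fin n) ℕ) : List (ℕ × Fin n) :=
  (List.finRange n).flatMap fun c =>
    (List.finRange m).flatMap fun r => List.replicate (M r c) (r.1 + 1, c)

/-- The row word `row(M)` (letters are 1-based row indices). -/
def rowWord (M : Matrix (Fin m) (Fin n) ℕ) : List ℕ := (rowWordLbl M).map Prod.fst

/-- The column word `col(M) = row(Mᵀ)`. -/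
def colWord (M : Matrix (Fin m) (Fin n) ℕ) : List ℕ := rowWord M.transpose

/-- The lowering bicrystal operator `f_i^row` (here `i` is the 1-based row index,
`1 ≤ i ≤ m - 1`): locate the rightmost unmatched `)` in `bracket_i(row(M))`, coming from an
entry in row `i` and some column `c`; decrease that entry by one and increase the entry of
row `i+1`, column `c` by one.  Returns `none` if every `)` is matched. -/
def frow (i : ℕ) (M : Matrix (Fin m) (Fin n) ℕ) : Option (Matrix (Fin m) (Fin n) ℕ) :=
  (lastUnmatched i (i + 1) (rowWordLbl M) 0).map fun c =>
    Matrix.of fun a b =>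
      if a.1 + 1 = i ∧ b = c then M a b - 1
      else if a.1 + 1 = i + 1 ∧ b = c then M a b + 1
      else M a b

/-- The raising bicrystal operator `e_i^row`: locate the leftmost unmatched `(` in
`bracket_i(row(M))`, coming from an entry in row `i+1` and some column `c`; decrease that
entry by one and increase the entry of row `i`, column `c` by one. -/
def erow (i : ℕ) (M : Matrix (Fin m) (Fin n) ℕ) : Option (Matrix (Fin m) (Fin n) ℕ) :=
  (lastUnmatched (i + 1) i (rowWordLbl M).reverse 0).map fun c =>
    Matrix.of fun a b =>
      if a.1 + 1 = i + 1 ∧ b = c then M a b - 1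
      else if a.1 + 1 = i ∧ b = c then M a b + 1
      else M a b

/-- `f_j^col(M) = (f_j^row(Mᵀ))ᵀ`. -/
def fcol (j : ℕ) (M : Matrix (Fin m) (Fin n) ℕ) : Option (Matrix (Fin m) (Fin n) ℕ) :=
  (frow j M.transpose).map Matrix.transpose

/-- `e_j^col(M) = (e_j^row(Mᵀ))ᵀ`. -/
def ecol (j : ℕ) (M : Matrix (Fin m) (Fin n) ℕ) : Option (Matrix (Fin m) (Fin n) ℕ) :=
  (erow j M.transpose).map Matrix.transpose

/-- `I` is (the set of cut indices of) a Levi datum for size `m`: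
`I = {0 = i_0 < i_1 < ⋯ < i_r = m}`. -/
def IsLeviDatum (m : ℕ) (I : Finset ℕ) : Prop := 0 ∈ I ∧ m ∈ I ∧ ∀ x ∈ I, x ≤ m

/-- The admissible bicrystal operators for the Levi datum `(𝐈, 𝐉)` are
`f_i^row, e_i^row` for `i ∉ 𝐈` and `f_j^col, e_j^col` for `j ∉ 𝐉`. -/
def AdmissibleOp (m n : ℕ) (I J : Finset ℕ)
    (φ : Matrix (Fin m) (Fin n) ℕ → Option (Matrix (Fin m) (Fin n) ℕ)) : Prop :=
  (∃ i, 0 < i ∧ i < m ∧ i ∉ I ∧ (φ = frow i ∨ φ = erow i)) ∨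
  (∃ j, 0 < j ∧ j < n ∧ j ∉ J ∧ (φ = fcol j ∨ φ = ecol j))

/-- A set `S` of exponent matrices is `(𝐈,𝐉)`-bicrystal closed if `φ(M) ∈ S ∪ {∅}` for
every admissible operator `φ` and every `M ∈ S`. -/
def BicrystalClosed (m n : ℕ) (I J : Finset ℕ) (S : Set (Matrix (Fin m) (Fin n) ℕ)) : Prop :=
  ∀ φ, AdmissibleOp m n I J φ → ∀ M ∈ S, ∀ N, φ M = some N → N ∈ S

/-- A term order on monomials in variables indexed by `σ`: a linear order on exponent
vectors compatible with addition and having `0` (i.e. the monomial `1`) as minimum. -/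
structure TermOrder (σ : Type) where
  le : (σ →₀ ℕ) → (σ →₀ ℕ) → Prop
  le_refl : ∀ u, le u u
  le_trans : ∀ u v w, le u v → le v w → le u w
  le_antisymm : ∀ u v, le u v → le v u → u = v
  le_total : ∀ u v, le u v ∨ le v u
  add_le_add : ∀ u v w, le u v → le (u + w) (v + w)
  zero_le : ∀ u, le 0 u

/-- `u` is the exponent vector of the initial term `init_≺ f`: it lies in the support of
`f` and is `≺`-largest among the monomials of `f`.  (If `f = 0`, no `u` satisfies this.) -/
def IsInitExp {σ : Type} (ord : TermOrder σ) (f : MvPolynomial σ ℂ) (u : σ →₀ ℕ) : Prop :=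
  u ∈ f.support ∧ ∀ v ∈ f.support, ord.le v u

/-- The initial ideal `init_≺ I = ⟨init_≺ f : f ∈ I, f ≠ 0⟩`. -/
noncomputable def initialIdeal {σ : Type} (ord : TermOrder σ) (I : Ideal (MvPolynomial σ ℂ)) :
    Ideal (MvPolynomial σ ℂ) :=
  Ideal.span {p | ∃ f ∈ I, ∃ u, IsInitExp ord f u ∧ p = MvPolynomial.monomial u (1 : ℂ)}

/-- The exponent vector of the monomial `z^M` attached to the matrix `M`. -/
noncomputable def expOf (M : Matrix (Fin m) (Fin n) ℕ) : (Fin m × Fin n) →₀ ℕ :=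
  Finsupp.equivFunOnFinite.symm fun p => M p.1 p.2

/-- `Mat_≺ I`, the set of exponent matrices of monomials lying in `init_≺ I`. -/
def matLT (ord : TermOrder (Fin m × Fin n)) (I : Ideal (MvPolynomial (Fin m × Fin n) ℂ)) :
    Set (Matrix (Fin m) (Fin n) ℕ) :=
  {M | MvPolynomial.monomial (expOf M) (1 : ℂ) ∈ initialIdeal ord I}

/-- Indices `a`, `b` (0-based) lie in the same diagonal block determined by the cuts `I`. -/
def SameBlock (I : Finset ℕ) (a b : ℕ) : Prop := ∀ i ∈ I, (a < i ↔ b < i)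

/-- `g` belongs to the block-diagonal Levi subgroup `L_𝐈 ≤ GL_m`: `g` is invertible and
vanishes outside the diagonal blocks cut out by `I`. -/
def InLevi {m : ℕ} (I : Finset ℕ) (g : Matrix (Fin m) (Fin m) ℂ) : Prop :=
  IsUnit g ∧ ∀ a b : Fin m, ¬ SameBlock I a.1 b.1 → g a b = 0

/-- The action of the pair `(g, h)` on `ℂ[Mat_{m,n}]`: `((g,h)·f)(Z) = f(g Z hᵀ)`,
i.e. the substitution `z_{ab} ↦ ∑_{c,d} g_{ac} h_{bd} z_{cd}`. -/
noncomputable def leviAct (g : Matrix (Fin m) (Fin m) ℂ) (h : Matrix (Fin n) (Fin n) ℂ) :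
    MvPolynomial (Fin m × Fin n) ℂ →ₐ[ℂ] MvPolynomial (Fin m × Fin n) ℂ :=
  MvPolynomial.aeval fun p => ∑ c : Fin m, ∑ d : Fin n,
    MvPolynomial.C (g p.1 c * h p.2 d) * MvPolynomial.X (c, d)

/-- The ideal `Idl` is stable under the action of `L_𝐈 × L_𝐉`. -/
def LeviStable (I J : Finset ℕ) (Idl : Ideal (MvPolynomial (Fin m × Fin n) ℂ)) : Prop :=
  ∀ g h, InLevi I g → InLevi J h → ∀ f ∈ Idl, leviAct g h f ∈ Idl

/-- An `L_𝐈 × L_𝐉`-stable ideal `Idl` is `(𝐈,𝐉,≺)`-bicrystalline: the set of exponent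
matrices of the standard monomials (monomials not in `init_≺ Idl`) is bicrystal closed. -/
def IsBicrystalline (m n : ℕ) (I J : Finset ℕ) (ord : TermOrder (Fin m × Fin n))
    (Idl : Ideal (MvPolynomial (Fin m × Fin n) ℂ)) : Prop :=
  LeviStable I J Idl ∧ BicrystalClosed m n I J {M | M ∉ matLT ord Idl}

/-- `z^a` divides `z^b` entrywise, both optional values being defined. -/
def OptDvd (x y : Option (Matrix (Fin m) (Fin n) ℕ)) : Prop :=
  ∃ a b, x = some a ∧ y = some b ∧ ∀ p q, a p q ≤ b p q

/-- `T` is a test set for `(Idl, ≺, φ)`: a finite subset of `Mat_≺ Idl` such that for every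
`M ∈ Mat_≺ Idl` with `φ(M) ≠ ∅` there is `N ∈ T` with `φ(N) ≠ ∅`, `z^N ∣ z^M` and
`z^{φ(N)} ∣ z^{φ(M)}`. -/
def IsTestSet (ord : TermOrder (Fin m × Fin n)) (Idl : Ideal (MvPolynomial (Fin m × Fin n) ℂ))
    (φ : Matrix (Fin m) (Fin n) ℕ → Option (Matrix (Fin m) (Fin n) ℕ))
    (T : Set (Matrix (Fin m) (Fin n) ℕ)) : Prop :=
  T.Finite ∧ T ⊆ matLT ord Idl ∧
  ∀ M ∈ matLT ord Idl, (∃ M', φ M = some M') →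
    ∃ N ∈ T, (∀ p q, N p q ≤ M p q) ∧ OptDvd (φ N) (φ M)

/-- `T` is a test set that is minimal with respect to containment among all test sets. -/
def MinimalTestSet (ord : TermOrder (Fin m × Fin n))
    (Idl : Ideal (MvPolynomial (Fin m × Fin n) ℂ))
    (φ : Matrix (Fin m) (Fin n) ℕ → Option (Matrix (Fin m) (Fin n) ℕ))
    (T : Set (Matrix (Fin m) (Fin n) ℕ)) : Prop :=
  IsTestSet ord Idl φ T ∧ ∀ T', IsTestSet ord Idl φ T' → T' ⊆ T → T' = T

/-- The entry of `M` in 1-based row `r` and column `c` (0 outside the matrix). -/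
def entRow (M : Matrix (Fin m) (Fin n) ℕ) (r : ℕ) (c : Fin n) : ℕ :=
  if h : 1 ≤ r ∧ r ≤ m then M ⟨r - 1, by omega⟩ c else 0

/-- The generic `d × d` minor of `Z` with row set `r` and column set `c`. -/
noncomputable def genMinor (m n d : ℕ) (r : Fin d → Fin m) (c : Fin d → Fin n) :
    MvPolynomial (Fin m × Fin n) ℂ :=
  (Matrix.of fun i j : Fin d => MvPolynomial.X (r i, c j)).det

/-- The exponent vector of the antidiagonal term of the minor with rows `r`, columns `c`. -/
noncomputable def antidiagExp (m n d : ℕ) (r : Fin d → Fin m) (c : Fin d → Fin n) :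
    (Fin m × Fin n) →₀ ℕ :=
  ∑ i : Fin d, Finsupp.single (r i, c i.rev) 1

/-- `ord` is an antidiagonal term order: the lead term of every minor of the generic
matrix `Z` is its antidiagonal term. -/
def IsAntidiagonalOrder (m n : ℕ) (ord : TermOrder (Fin m × Fin n)) : Prop :=
  ∀ d, 0 < d → ∀ (r : Fin d → Fin m) (c : Fin d → Fin n), StrictMono r → StrictMono c →
    IsInitExp ord (genMinor m n d r c) (antidiagExp m n d r c)

/-- All `d × d` minors of the contiguous submatrix `[a,a'] × [b,b']` of `Z`
(1-based bounds). -/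
def minorsOfSub (m n : ℕ) (a a' b b' d : ℕ) : Set (MvPolynomial (Fin m × Fin n) ℂ) :=
  {p | ∃ (r : Fin d → Fin m) (c : Fin d → Fin n), StrictMono r ∧ StrictMono c ∧
    (∀ i, a ≤ (r i).1 + 1 ∧ (r i).1 + 1 ≤ a') ∧
    (∀ j, b ≤ (c j).1 + 1 ∧ (c j).1 + 1 ≤ b') ∧ p = genMinor m n d r c}

/-- `G` is a Gröbner basis of `Idl` with respect to `ord`:
`G ⊆ Idl` and `init_≺ Idl = ⟨init_≺ g : g ∈ G⟩`. -/
def IsGroebnerBasis (ord : TermOrder (Fin m × Fin n))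
    (Idl : Ideal (MvPolynomial (Fin m × Fin n) ℂ))
    (G : Set (MvPolynomial (Fin m × Fin n) ℂ)) : Prop :=
  G ⊆ (Idl : Set (MvPolynomial (Fin m × Fin n) ℂ)) ∧
  initialIdeal ord Idl =
    Ideal.span {p | ∃ g ∈ G, ∃ u, IsInitExp ord g u ∧ p = MvPolynomial.monomial u (1 : ℂ)}

/-- The priority of the variable `z_{ij}` in the variable order
`z_{1n} ≻ z_{1,n-1} ≻ ⋯ ≻ z_{11} ≻ z_{2n} ≻ ⋯ ≻ z_{m1}` (smaller rank = larger variable). -/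
def lexRank (m n : ℕ) (p : Fin m × Fin n) : ℕ := p.1.1 * n + (n - 1 - p.2.1)

/-- `ord` is the (antidiagonal) lexicographic term order determined by the variable order
`z_{1n} ≻ z_{1,n-1} ≻ ⋯ ≻ z_{11} ≻ z_{2n} ≻ ⋯ ≻ z_{m1}`. -/
def IsAntidiagLex (m n : ℕ) (ord : TermOrder (Fin m × Fin n)) : Prop :=
  ∀ u v, ord.le u v ↔
    u = v ∨ ∃ p, u p < v p ∧ ∀ q, lexRank m n q < lexRank m n p → u q = v q

/-- The rank function `r_v(i,j) = #{k ≤ i : v(k) ≤ j}` (1-based), at 0-based `(i,j)`. -/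
def rankP (N : ℕ) (v : Equiv.Perm (Fin N)) (i j : Fin N) : ℕ :=
  (Finset.univ.filter fun k : Fin N => k ≤ i ∧ v k ≤ j).card

/-- The antidiagonal drift `drift_v(i,j) = i + j - 1 - r_v(i,j)` (1-based), at 0-based
`(i,j)`. -/
def driftP (N : ℕ) (v : Equiv.Perm (Fin N)) (i j : Fin N) : ℕ :=
  i.1 + j.1 + 1 - rankP N v i j

/-- The specialized matrix `Z_v`: ones on the permutation positions, zeros southwest-ward
of them (positions `(i,j)` with `j > v(i)` or `i > v⁻¹(j)`), variables elsewhere. -/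
noncomputable def Zv (N : ℕ) (v : Equiv.Perm (Fin N)) :
    Matrix (Fin N) (Fin N) (MvPolynomial (Fin N × Fin N) ℂ) :=
  Matrix.of fun i j =>
    if v i = j then 1 else if v i < j ∨ v.symm j < i then 0 else MvPolynomial.X (i, j)

/-- The `k`-th basic minor `Δ_v^{(k)}`: the determinant of the northwest-justified
`k × k` submatrix of `Z_v`. -/
noncomputable def basicMinor (N k : ℕ) (hk : k ≤ N) (v : Equiv.Perm (Fin N)) :
    MvPolynomial (Fin N × Fin N) ℂ :=
  (Matrix.of fun i j : Fin k => Zv N v (Fin.castLE hk i) (Fin.castLE hk j)).det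

/-- The one-coordinate index-deletion map underlying `φ_{i,j}`: delete the index `i`
from `[n+1]`, renumbering the indices above `i` down by one. -/
def delIdx {N : ℕ} (i a : Fin (N + 1)) (h : a ≠ i) : Fin N :=
  if hlt : a.1 < i.1 then ⟨a.1, by have := i.isLt; omega⟩
  else ⟨a.1 - 1, by
    have h1 := a.isLt
    have h2 : a.1 ≠ i.1 := fun hh => h (Fin.ext hh)
    omega⟩

/-- Row insertion `T ← x` for a tableau given as its list of rows (top to bottom). -/
def rowInsert : List (List ℕ) → ℕ → List (List ℕ)
  | [], x => [[x]]
  | row :: rest, x =>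
    match row.findIdx? (fun y => decide (x < y)) with
    | none => (row ++ [x]) :: rest
    | some k => (row.set k x) :: rowInsert rest (row.getD k 0)

/-- The insertion tableau `tab(w)` of a word `w`. -/
def tab (w : List ℕ) : List (List ℕ) := w.foldl rowInsert []

/-- The `RSK` correspondence: `RSK(M) = (tab(row(M)), tab(col(M)))`. -/
def RSKmap (M : Matrix (Fin m) (Fin n) ℕ) : List (List ℕ) × List (List ℕ) :=
  (tab (rowWord M), tab (colWord M))

/-- The column reading word of a tableau, with each letter labelled by its box `(row, col)`:
entries are read along columns bottom-to-top, left-to-right. -/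
def tabWordLbl (T : List (List ℕ)) : List (ℕ × (ℕ × ℕ)) :=
  (List.range (T.getD 0 []).length).flatMap fun j =>
    ((List.range T.length).reverse).filterMap fun r =>
      ((T.getD r [])[j]?).map fun x => (x, (r, j))

/-- The column reading word `word(T)` (columns bottom-to-top, left-to-right). -/
def tabWord (T : List (List ℕ)) : List ℕ := (tabWordLbl T).map Prod.fst

/-- Replace the entry of `T` in box `(r, j)` by `v`. -/
def setBox (T : List (List ℕ)) (r j v : ℕ) : List (List ℕ) :=
  T.set r ((T.getD r []).set j v)

/-- The tableau crystal lowering operator `f_i`: change the `i` of `T` corresponding to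
the rightmost unmatched `)` of `bracket_i(word(T))` into an `i + 1` (or `∅`). -/
def fTab (i : ℕ) (T : List (List ℕ)) : Option (List (List ℕ)) :=
  (lastUnmatched i (i + 1) (tabWordLbl T) 0).map fun p => setBox T p.1 p.2 (i + 1)

/-- The tableau crystal raising operator `e_i`: change the `i + 1` of `T` corresponding to
the leftmost unmatched `(` of `bracket_i(word(T))` into an `i` (or `∅`). -/
def eTab (i : ℕ) (T : List (List ℕ)) : Option (List (List ℕ)) :=
  (lastUnmatched (i + 1) i (tabWordLbl T).reverse 0).map fun p => setBox T p.1 p.2 i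

/-- `T` (a list of rows, top to bottom) is a semistandard Young tableau with positive
integer entries. -/
def IsSSYT (T : List (List ℕ)) : Prop :=
  (∀ r ∈ T, r ≠ []) ∧
  (∀ r ∈ T, List.Chain' (· ≤ ·) r) ∧
  (∀ i, (T.getD (i + 1) []).length ≤ (T.getD i []).length) ∧
  (∀ i j, j < (T.getD (i + 1) []).length →
    (T.getD i []).getD j 0 < (T.getD (i + 1) []).getD j 0) ∧
  (∀ r ∈ T, ∀ x ∈ r, 1 ≤ x)

/-- `w` is `[a,b]`-ballot: every initial segment contains at least as many `i`s as
`(i+1)`s, for each `i ∈ [a, b-1]`. -/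
def IsBallot (a b : ℕ) (w : List ℕ) : Prop :=
  ∀ k i, a ≤ i → i + 1 ≤ b → (w.take k).count (i + 1) ≤ (w.take k).count i

/-- `T` is an `[a,b]`-Littlewood–Richardson tableau: `revword(T)|_{[a,b]}` is
`[a,b]`-ballot. -/
def IsLRInterval (a b : ℕ) (T : List (List ℕ)) : Prop :=
  IsBallot a b (((tabWord T).reverse).filter fun x => decide (a ≤ x ∧ x ≤ b))

/-- `T` is `𝐊`-LR for `𝐊 = {0 = k_0 < ⋯ < k_t = ℓ}`: `T` is `[k_{α-1}+1, k_α]`-LR for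
every pair of consecutive elements of `𝐊`. -/
def IsKLR (K : Finset ℕ) (T : List (List ℕ)) : Prop :=
  ∀ a b, a ∈ K → b ∈ K → a < b → (∀ x ∈ K, ¬(a < x ∧ x < b)) → IsLRInterval (a + 1) b T

/-- The `[a,b]`-width of a word: the maximum length of a strictly decreasing subsequence
of the restriction `u|_{[a,b]}`. -/
noncomputable def widthInterval (a b : ℕ) (u : List ℕ) : ℕ :=
  sSup {d | ∃ s : List ℕ, s.Sublist (u.filter fun x => decide (a ≤ x ∧ x ≤ b)) ∧
    List.Chain' (· > ·) s ∧ s.length = d}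

/-- The entry of `T` in box `p = (row, col)`. -/
def tabEntry (T : List (List ℕ)) (p : ℕ × ℕ) : ℕ := (T.getD p.1 []).getD p.2 0

/-- The `[a,b]`-width of a tableau: the maximum length of an `[a,b]`-antidiagonal, i.e. a
sequence of boxes of `T` from distinct rows with entries in `[a,b]`, each box weakly east
and strictly north of the previous one, whose entries strictly decrease read bottom to
top. -/
noncomputable def tabWidth (a b : ℕ) (T : List (List ℕ)) : ℕ :=
  sSup {d | ∃ L : List (ℕ × ℕ),
    (∀ p ∈ L, p.1 < T.length ∧ p.2 < (T.getD p.1 []).length ∧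
      a ≤ tabEntry T p ∧ tabEntry T p ≤ b) ∧
    List.Chain' (fun p q => q.1 < p.1 ∧ p.2 ≤ q.2 ∧ tabEntry T q < tabEntry T p) L ∧
    L.length = d}

/-- The maximum length of a sequence of nonzero entries of `M` in antidiagonal position
(row indices strictly decreasing, column indices strictly increasing along the sequence)
with all (1-based) row indices in `[a,b]`. -/
noncomputable def rowAntidiagWidth (a b : ℕ) (M : Matrix (Fin m) (Fin n) ℕ) : ℕ :=
  sSup {d | ∃ L : List (Fin m × Fin n),
    (∀ p ∈ L, M p.1 p.2 ≠ 0 ∧ a ≤ p.1.1 + 1 ∧ p.1.1 + 1 ≤ b) ∧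
    List.Chain' (fun p q => q.1 < p.1 ∧ p.2 < q.2) L ∧
    L.length = d}

/-- As `rowAntidiagWidth`, but with all (1-based) column indices in `[a,b]`. -/
noncomputable def colAntidiagWidth (a b : ℕ) (M : Matrix (Fin m) (Fin n) ℕ) : ℕ :=
  sSup {d | ∃ L : List (Fin m × Fin n),
    (∀ p ∈ L, M p.1 p.2 ≠ 0 ∧ a ≤ p.2.1 + 1 ∧ p.2.1 + 1 ≤ b) ∧
    List.Chain' (fun p q => q.1 < p.1 ∧ p.2 < q.2) L ∧
    L.length = d}

/-- An elementary Knuth transformation: `prq ≡ rpq` for `p ≤ q < r`, and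
`qpr ≡ qrp` for `p < q ≤ r`. -/
inductive KnuthStep : List ℕ → List ℕ → Prop
  | swap1 (u v : List ℕ) (p q r : ℕ) (h1 : p ≤ q) (h2 : q < r) :
      KnuthStep (u ++ p :: r :: q :: v) (u ++ r :: p :: q :: v)
  | swap2 (u v : List ℕ) (p q r : ℕ) (h1 : p < q) (h2 : q ≤ r) :
      KnuthStep (u ++ q :: p :: r :: v) (u ++ q :: r :: p :: v)

/-- Knuth equivalence of words. -/
def KnuthEquiv : List ℕ → List ℕ → Prop := Relation.EqvGen KnuthStep

end GCS

namespace KD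
open Finset

section Rank
variable {K : Type*} [Field K]

/-- rank of the submatrix of `Z` with rows `A` and columns `B` -/
noncomputable def rk (Z : ℕ → ℕ → K) (A B : Finset ℕ) : ℕ :=
  (Matrix.of fun (r : A) (c : B) => Z r c).rank

lemma rk_congr {Z Z' : ℕ → ℕ → K} {A B : Finset ℕ} (h : ∀ r ∈ A, ∀ c ∈ B, Z r c = Z' r c) :
    rk Z A B = rk Z' A B := by
  unfold rk
  congr 1
  ext r c
  exact h r r.2 c c.2

lemma rk_mono (Z : ℕ → ℕ → K) {A A' B B' : Finset ℕ} (hA : A ⊆ A') (hB : B ⊆ B') :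
    rk Z A B ≤ rk Z A' B' := by
  unfold rk
  exact Matrix.rank_submatrix_le (Matrix.of fun (r : A') (c : B') => Z r c)
    (fun r : A => (⟨r, hA r.2⟩ : A')) (fun r : B => (⟨r, hB r.2⟩ : B'))

lemma rk_transpose (Z : ℕ → ℕ → K) (A B : Finset ℕ) :
    rk (fun r c => Z c r) B A = rk Z A B := by
  unfold rk
  rw [← Matrix.rank_transpose]
  rfl

lemma rk_rowop (Z : ℕ → ℕ → K) {A B : Finset ℕ} {i : ℕ} (hi : i ∈ A) (t : ℕ → K) :
    rk (fun r c => Z r c + t r * Z i c) A B ≤ rk Z A B := by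
  unfold rk
  have : (Matrix.of fun (r : A) (c : B) => Z r c + t r * Z i c) =
      (1 + Matrix.of fun (r s : A) => if s = ⟨i, hi⟩ then t r else 0) *
        (Matrix.of fun (r : A) (c : B) => Z r c) := by
    rw [Matrix.add_mul, Matrix.one_mul]
    ext r c
    simp [Matrix.mul_apply]
  rw [this]
  exact Matrix.rank_mul_le_right _ _

lemma rk_colop (Z : ℕ → ℕ → K) {A B : Finset ℕ} {j : ℕ} (hj : j ∈ B) (t : ℕ → K) :
    rk (fun r c => Z r c + t c * Z r j) A B ≤ rk Z A B := by
  rw [← rk_transpose, ← rk_transpose Z]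
  exact rk_rowop (fun r c => Z c r) hj t

/-- the column span -/
noncomputable def csp (Z : ℕ → ℕ → K) (A B : Finset ℕ) : Submodule K (A → K) :=
  Submodule.span K ((fun (s : ℕ) (r : A) => Z r s) '' (B : Set ℕ))

lemma rk_eq_csp (Z : ℕ → ℕ → K) (A B : Finset ℕ) :
    rk Z A B = Module.finrank K (csp Z A B) := by
  unfold rk csp
  rw [Matrix.rank_eq_finrank_span_cols]
  have : Set.range (Matrix.of fun (r : A) (c : B) => Z r c).col =
      ((fun (s : ℕ) (r : A) => Z r s) '' (B : Set ℕ)) := by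
    ext x
    simp only [Set.mem_range, Set.mem_image]
    constructor
    · rintro ⟨y, rfl⟩; exact ⟨y, y.2, rfl⟩
    · rintro ⟨y, hy, rfl⟩; exact ⟨⟨y, hy⟩, rfl⟩
  rw [this]

lemma csp_mono (Z : ℕ → ℕ → K) {A B B' : Finset ℕ} (hB : B ⊆ B') : csp Z A B ≤ csp Z A B' :=
  Submodule.span_mono (Set.image_mono (by exact_mod_cast hB))

lemma col_dep (Z : ℕ → ℕ → K) {A B : Finset ℕ} {j : ℕ}
    (h : rk Z A (insert j B) ≤ rk Z A B) : ∃ α : ℕ → K, ∀ r ∈ A, Z r j = ∑ s ∈ B, α s * Z r s := by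
  rw [rk_eq_csp, rk_eq_csp] at h
  have h1 : csp Z A B = csp Z A (insert j B) :=
    Submodule.eq_of_le_of_finrank_le (csp_mono Z (subset_insert _ _)) h
  have h2 : (fun r : A => Z r j) ∈ csp Z A B := by
    rw [h1]
    exact Submodule.subset_span ⟨j, by simp, rfl⟩
  unfold csp at h2
  rw [Submodule.mem_span_image_finset_iff_exists_fun'] at h2
  obtain ⟨c, hc⟩ := h2
  refine ⟨c, fun r hr => ?_⟩
  have := congrFun hc ⟨r, hr⟩
  simpa using this.symm

lemma rk_le_of_col_dep (Z : ℕ → ℕ → K) {A B : Finset ℕ} {j : ℕ} (α : ℕ → K)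
    (h : ∀ r ∈ A, Z r j = ∑ s ∈ B, α s * Z r s) : rk Z A (insert j B) ≤ rk Z A B := by
  rw [rk_eq_csp, rk_eq_csp]
  apply Submodule.finrank_mono
  unfold csp
  rw [Submodule.span_le]
  rintro _ ⟨s, hs, rfl⟩
  rw [coe_insert] at hs
  rcases hs with rfl | hs
  · simp only [SetLike.mem_coe]
    rw [Submodule.mem_span_image_finset_iff_exists_fun']
    refine ⟨α, ?_⟩
    ext r
    simp [h r r.2]
  · exact Submodule.subset_span ⟨s, hs, rfl⟩

lemma row_dep (Z : ℕ → ℕ → K) {A B : Finset ℕ} {i : ℕ}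
    (h : rk Z (insert i A) B ≤ rk Z A B) : ∃ β : ℕ → K, ∀ s ∈ B, Z i s = ∑ r ∈ A, β r * Z r s := by
  rw [← rk_transpose, ← rk_transpose Z A] at h
  exact col_dep _ h

lemma rk_le_of_row_dep (Z : ℕ → ℕ → K) {A B : Finset ℕ} {i : ℕ} (β : ℕ → K)
    (h : ∀ s ∈ B, Z i s = ∑ r ∈ A, β r * Z r s) : rk Z (insert i A) B ≤ rk Z A B := by
  rw [← rk_transpose, ← rk_transpose Z A]
  exact rk_le_of_col_dep _ β h

lemma schur (Z Z1 : ℕ → ℕ → K) {A B : Finset ℕ} {i j : ℕ} (hz : Z i j ≠ 0)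
    (h1 : ∀ r ∈ A, ∀ s ∈ B, Z1 r s = Z r s - Z r j * Z i s / Z i j) :
    rk Z1 A B + 1 = rk Z (insert i A) (insert j B) := by
  rw [rk_eq_csp, rk_eq_csp]
  let φ : (((insert i A : Finset ℕ)) → K) →ₗ[K] (A → K) :=
    { toFun := fun v r => v ⟨r, mem_insert_of_mem r.2⟩
        - Z r j / Z i j * v ⟨i, mem_insert_self _ _⟩
      map_add' := by intro x y; ext r; simp; ring
      map_smul' := by intro c x; ext r; simp; ring }
  let cj : (((insert i A : Finset ℕ)) → K) := fun r => Z r j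
  set W := csp Z (insert i A) (insert j B) with hW
  have hcj : cj ∈ W := Submodule.subset_span ⟨j, by simp, rfl⟩
  have hφcj : φ cj = 0 := by
    ext r
    simp [φ, cj]
    field_simp
    simp
  have hker : ∀ x, φ x = 0 → x = (x ⟨i, mem_insert_self _ _⟩ / Z i j) • cj := by
    intro x hx
    ext ⟨r, hr⟩
    rcases mem_insert.1 hr with rfl | hr'
    · simp [cj]; field_simp
    · have := congrFun hx ⟨r, hr'⟩
      simp [φ] at this
      rw [sub_eq_zero] at this
      simp [cj]
      rw [this]; ring
  have hmap : W.map φ = csp Z1 A B := by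
    rw [hW]
    unfold csp
    rw [Submodule.map_span, coe_insert, Set.image_insert_eq, Set.image_insert_eq]
    change Submodule.span K (insert (φ cj) _) = _
    rw [hφcj, Submodule.span_insert_zero, Set.image_image]
    congr 1
    apply Set.image_congr
    intro s hs
    ext r
    simp [φ]
    rw [h1 r r.2 s hs]
    ring
  have hrn := LinearMap.finrank_range_add_finrank_ker (φ.domRestrict W)
  rw [LinearMap.range_domRestrict, hmap] at hrn
  rw [← hrn]
  congr 1
  have hne : (⟨cj, hcj⟩ : W) ≠ 0 := by
    intro h
    have h2 : cj = 0 := congrArg Subtype.val h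
    exact hz (congrFun h2 ⟨i, mem_insert_self _ _⟩)
  have : LinearMap.ker (φ.domRestrict W) = Submodule.span K {(⟨cj, hcj⟩ : W)} := by
    ext ⟨x, hx⟩
    rw [LinearMap.mem_ker, Submodule.mem_span_singleton]
    constructor
    · intro h
      refine ⟨(x ⟨i, mem_insert_self _ _⟩ / Z i j), ?_⟩
      apply Subtype.ext
      exact (hker x h).symm
    · rintro ⟨a, ha⟩
      rw [← ha]
      rw [map_smul]
      have : φ.domRestrict W ⟨cj, hcj⟩ = 0 := hφcj
      rw [this, smul_zero]
  rw [this, finrank_span_singleton hne]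
end Rank
end KD

namespace KD
open Finset

/-- chains: rows increasing, columns decreasing, inside `A × B`, all cells in `P` -/
def HC (P : ℕ → ℕ → Prop) : ℕ → Finset ℕ → Finset ℕ → Prop
  | 0, _, _ => True
  | k + 1, A, B => ∃ i ∈ A, ∃ j ∈ B, P i j ∧ HC P k (A.filter (i < ·)) (B.filter (· < j))

lemma HC_mono {P : ℕ → ℕ → Prop} : ∀ {k : ℕ} {A A' B B' : Finset ℕ}, A ⊆ A' → B ⊆ B' →
    HC P k A B → HC P k A' B'
  | 0, _, _, _, _, _, _, _ => trivial
  | k + 1, _, _, _, _, hA, hB, ⟨i, hi, j, hj, hp, h⟩ =>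
    ⟨i, hA hi, j, hB hj, hp, HC_mono (filter_subset_filter _ hA) (filter_subset_filter _ hB) h⟩

lemma HC_succ {P : ℕ → ℕ → Prop} : ∀ {k : ℕ} {A B : Finset ℕ}, HC P (k + 1) A B → HC P k A B
  | 0, _, _, _ => trivial
  | _ + 1, _, _, ⟨i, hi, j, hj, hp, h⟩ => ⟨i, hi, j, hj, hp, HC_succ h⟩

lemma HC_le {P : ℕ → ℕ → Prop} {k l : ℕ} {A B : Finset ℕ} (hkl : k ≤ l) (h : HC P l A B) :
    HC P k A B := by
  induction hkl with
  | refl => exact h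
  | step _ ih => exact ih (HC_succ h)

section Val
variable {K : Type*} [Field K] {Γ₀ : Type*} [LinearOrderedCommGroupWithZero Γ₀]

/-- hypotheses on the weights -/
structure Wt (v : Valuation K Γ₀) (m n : ℕ) (g g' : ℕ → ℕ → K) : Prop where
  g_ne : ∀ i j, g i j ≠ 0
  g'_ne : ∀ i j, g' i j ≠ 0
  lt : ∀ i j, v (g' i j) < v (g i j)
  monge : ∀ i r c j, i < r → r ≤ m → c < j → j ≤ n →
    v (g r j) * v (g i c) < v (g' i j) * v (g r c)

variable {v : Valuation K Γ₀} {m n : ℕ} {g g' : ℕ → ℕ → K} {P : ℕ → ℕ → Prop}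

lemma small_corr (hw : Wt v m n g g') {i r c j : ℕ} (hir : i < r) (hr : r ≤ m) (hcj : c < j)
    (hj : j ≤ n) {x y z : K} (hx : v x ≤ v (g r j)) (hy : v y ≤ v (g i c))
    (hz : v (g' i j) ≤ v z) : v (x * y / z) < v (g r c) := by
  have h1 := hw.monge i r c j hir hr hcj hj
  have hz0 : 0 < v z := lt_of_lt_of_le (by
    rw [Valuation.pos_iff]; exact hw.g'_ne i j) hz
  rw [map_div₀, map_mul, div_lt_iff₀ hz0]
  calc v x * v y ≤ v (g r j) * v (g i c) := mul_le_mul' hx hy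
    _ < v (g' i j) * v (g r c) := h1
    _ ≤ v z * v (g r c) := mul_le_mul_left hz _
    _ = v (g r c) * v z := mul_comm _ _

lemma LB (hw : Wt v m n g g') : ∀ (k : ℕ) (A B : Finset ℕ) (Z : ℕ → ℕ → K),
    (∀ r ∈ A, r ≤ m) → (∀ s ∈ B, s ≤ n) → (∀ r ∈ A, ∀ s ∈ B, v (Z r s) ≤ v (g r s)) →
    (∀ r ∈ A, ∀ s ∈ B, P r s → v (Z r s) = v (g r s)) → HC P k A B → k ≤ rk Z A B
  | 0, _, _, _, _, _, _, _, _ => Nat.zero_le _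
  | k + 1, A, B, Z, hA, hB, hle, heq, ⟨i, hi, j, hj, hp, h⟩ => by
    have hij := heq i hi j hj hp
    have hz : Z i j ≠ 0 := by
      intro h0
      rw [h0, map_zero] at hij
      exact hw.g_ne i j ((Valuation.zero_iff v).1 hij.symm)
    set A' := A.filter (i < ·) with hA'
    set B' := B.filter (· < j) with hB'
    have hA1 : ∀ r ∈ A', r ∈ A ∧ i < r := fun r hr => by simpa [hA'] using hr
    have hB1 : ∀ r ∈ B', r ∈ B ∧ r < j := fun r hr => by simpa [hB'] using hr
    let Z1 : ℕ → ℕ → K := fun r s => Z r s - Z r j * Z i s / Z i j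
    have hcor : ∀ r ∈ A', ∀ s ∈ B', v (Z r j * Z i s / Z i j) < v (g r s) := fun r hr s hs =>
      small_corr hw (hA1 r hr).2 (hA r (hA1 r hr).1) (hB1 s hs).2 (hB j hj)
        (hle r (hA1 r hr).1 j hj) (hle i hi s (hB1 s hs).1) (by rw [hij]; exact (hw.lt i j).le)
    have h1 := LB hw k A' B' Z1 (fun r hr => hA r (hA1 r hr).1) (fun r hr => hB r (hB1 r hr).1)
      (fun r hr s hs => (Valuation.map_sub v _ _).trans
        (max_le (hle r (hA1 r hr).1 s (hB1 s hs).1) (hcor r hr s hs).le))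
      (fun r hr s hs hrs => by
        have h2 := heq r (hA1 r hr).1 s (hB1 s hs).1 hrs
        rw [← h2]
        apply Valuation.map_sub_eq_of_lt_left
        rw [h2]
        exact hcor r hr s hs) h
    have h3 := schur Z Z1 (A := A') (B := B') hz (fun _ _ _ _ => rfl)
    have h4 : rk Z (insert i A') (insert j B') ≤ rk Z A B :=
      rk_mono Z (insert_subset hi (filter_subset _ _)) (insert_subset hj (filter_subset _ _))
    omega

/-- valid regions at stage `(i,j)` -/
def Reg (m n i j a a' b c : ℕ) : Prop :=
  a < a' ∧ b < c ∧ a' ≤ m ∧ c ≤ n ∧ (i ≤ a ∨ (a + 1 = i ∧ c ≤ j)) ∧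
    (a = 0 ∨ c = n ∨ a < i ∨ (a = i ∧ j ≤ c)) ∧ (a' = m ∨ b = 0)

/-- cells processed at stage `(i,j)` -/
def InL (m n i j r s : ℕ) : Prop :=
  1 ≤ r ∧ r ≤ m ∧ 1 ≤ s ∧ s ≤ n ∧ (i < r ∨ (r = i ∧ s ≤ j))

structure Good (v : Valuation K Γ₀) (m n : ℕ) (g : ℕ → ℕ → K) (P : ℕ → ℕ → Prop)
    (Z : ℕ → ℕ → K) (i j : ℕ) : Prop where
  eqP : ∀ r s, InL m n i j r s → P r s → v (Z r s) = v (g r s)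
  ltP : ∀ r s, InL m n i j r s → ¬ P r s → v (Z r s) < v (g r s)
  reg : ∀ a a' b c, Reg m n i j a a' b c →
    HC P (rk Z (Ioc a a') (Ioc b c)) (Ioc a a') (Ioc b c)

lemma Good.le {Z : ℕ → ℕ → K} {i j : ℕ} (h : Good v m n g P Z i j) {r s : ℕ}
    (hl : InL m n i j r s) : v (Z r s) ≤ v (g r s) := by
  by_cases hp : P r s
  · exact (h.eqP r s hl hp).le
  · exact (h.ltP r s hl hp).le

/-- subregions: new region at the pivot `(i+1,j+1)` -/
lemma Ioc_row {i a' : ℕ} (h : i < a') : Ioc i a' = insert (i + 1) (Ioc (i + 1) a') := by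
  ext x; simp only [mem_Ioc, mem_insert]; omega

lemma Ioc_col {b j : ℕ} (h : b < j + 1) : Ioc b (j + 1) = insert (j + 1) (Ioc b j) := by
  ext x; simp only [mem_Ioc, mem_insert]; omega

lemma Reg_cases {i j a a' b c : ℕ} (hi : i + 1 ≤ m) (hj : j + 1 ≤ n)
    (h : Reg m n (i + 1) (j + 1) a a' b c) :
    Reg m n (i + 1) j a a' b c ∨ (a = i ∧ c = j + 1 ∧ i < a' ∧ b < j + 1 ∧ a' ≤ m ∧
      (a' = m ∨ b = 0)) := by
  unfold Reg at *
  omega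

/-- subregions of the new region -/
lemma reg_sub0 {Z0 : ℕ → ℕ → K} {i j a' b : ℕ} (hG : Good v m n g P Z0 (i + 1) j)
    (hj : j + 1 ≤ n) (ha : a' ≤ m) (hab : a' = m ∨ b = 0) :
    HC P (rk Z0 (Ioc (i + 1) a') (Ioc b j)) (Ioc (i + 1) a') (Ioc b j) := by
  rcases Nat.lt_or_ge (i + 1) a' with h1 | h1
  · rcases Nat.lt_or_ge b j with h2 | h2
    · apply hG.reg
      unfold Reg
      omega
    · have : rk Z0 (Ioc (i + 1) a') (Ioc b j) = 0 := by
        rw [Ioc_eq_empty_of_le h2]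
        unfold rk
        exact Nat.le_zero.1 ((Matrix.rank_le_card_width _).trans (by simp))
      rw [this]; trivial
  · have : rk Z0 (Ioc (i + 1) a') (Ioc b j) = 0 := by
      rw [Ioc_eq_empty_of_le h1]
      unfold rk
      exact Nat.le_zero.1 ((Matrix.rank_le_card_height _).trans (by simp))
    rw [this]; trivial

lemma reg_subA {Z0 : ℕ → ℕ → K} {i j a' b : ℕ} (hG : Good v m n g P Z0 (i + 1) j)
    (hj : j + 1 ≤ n) (hb : b < j + 1) (ha : a' ≤ m) (hab : a' = m ∨ b = 0) :
    HC P (rk Z0 (Ioc (i + 1) a') (Ioc b (j + 1))) (Ioc (i + 1) a') (Ioc b (j + 1)) := by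
  rcases Nat.lt_or_ge (i + 1) a' with h1 | h1
  · apply hG.reg
    unfold Reg
    omega
  · have : rk Z0 (Ioc (i + 1) a') (Ioc b (j + 1)) = 0 := by
      rw [Ioc_eq_empty_of_le h1]
      unfold rk
      exact Nat.le_zero.1 ((Matrix.rank_le_card_height _).trans (by simp))
    rw [this]; trivial

lemma reg_subB {Z0 : ℕ → ℕ → K} {i j a' b : ℕ} (hG : Good v m n g P Z0 (i + 1) j)
    (hj : j + 1 ≤ n) (hia : i < a') (ha : a' ≤ m) (hab : a' = m ∨ b = 0) :
    HC P (rk Z0 (Ioc i a') (Ioc b j)) (Ioc i a') (Ioc b j) := by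
  rcases Nat.lt_or_ge b j with h2 | h2
  · apply hG.reg
    unfold Reg
    omega
  · have : rk Z0 (Ioc i a') (Ioc b j) = 0 := by
      rw [Ioc_eq_empty_of_le h2]
      unfold rk
      exact Nat.le_zero.1 ((Matrix.rank_le_card_width _).trans (by simp))
    rw [this]; trivial

/-- the elbow modification -/
noncomputable def elbow (Z0 : ℕ → ℕ → K) (i j : ℕ) (z : K) : ℕ → ℕ → K := fun r s =>
  if r = i + 1 ∧ s = j + 1 then z
  else if i + 1 < r ∧ s < j + 1 then Z0 r s + Z0 r (j + 1) * Z0 (i + 1) s / z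
  else Z0 r s

lemma elbow_old {Z0 : ℕ → ℕ → K} {i j : ℕ} {z : K} (hG : Good v m n g P Z0 (i + 1) j)
    (hi : i + 1 ≤ m) (hj : j + 1 ≤ n) {a a' b c : ℕ} (hR : Reg m n (i + 1) j a a' b c)
    (hR' : Reg m n (i + 1) (j + 1) a a' b c) :
    HC P (rk (elbow Z0 i j z) (Ioc a a') (Ioc b c)) (Ioc a a') (Ioc b c) := by
  refine HC_le ?_ (hG.reg a a' b c hR)
  unfold Reg at hR hR'
  by_cases h1 : a < i + 1
  · have hmem : i + 1 ∈ Ioc a a' := by rw [mem_Ioc]; omega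
    refine le_trans (le_of_eq ?_) (rk_rowop Z0 hmem
      (fun r => if i + 1 < r then Z0 r (j + 1) / z else 0))
    apply rk_congr
    intro r hr s hs
    rw [mem_Ioc] at hr hs
    have hs1 : s < j + 1 := by omega
    unfold elbow
    rw [if_neg (by omega)]
    by_cases hr1 : i + 1 < r
    · rw [if_pos ⟨hr1, hs1⟩, if_pos hr1]; ring
    · rw [if_neg (by omega), if_neg hr1]; ring
  · by_cases h2 : b < j + 1
    · have hmem : j + 1 ∈ Ioc b c := by rw [mem_Ioc]; omega
      refine le_trans (le_of_eq ?_) (rk_colop Z0 hmem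
        (fun s => if s < j + 1 then Z0 (i + 1) s / z else 0))
      apply rk_congr
      intro r hr s hs
      rw [mem_Ioc] at hr hs
      have hr1 : i + 1 < r := by omega
      unfold elbow
      rw [if_neg (by omega)]
      by_cases hs1 : s < j + 1
      · rw [if_pos ⟨hr1, hs1⟩, if_pos hs1]; ring
      · rw [if_neg (by omega), if_neg hs1]; ring
    · apply le_of_eq
      apply rk_congr
      intro r hr s hs
      rw [mem_Ioc] at hr hs
      unfold elbow
      rw [if_neg (by omega), if_neg (by omega)]

lemma elbow_new {Z0 : ℕ → ℕ → K} {i j : ℕ} {z : K} (hz : z ≠ 0) {a' b : ℕ} (ha : i < a')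
    (hb : b < j + 1) :
    rk (elbow Z0 i j z) (Ioc i a') (Ioc b (j + 1)) =
      rk Z0 (Ioc (i + 1) a') (Ioc b j) + 1 := by
  rw [Ioc_row ha, Ioc_col hb]
  symm
  have h0 : elbow Z0 i j z (i + 1) (j + 1) = z := by simp [elbow]
  apply schur
  · rwa [h0]
  · intro r hr s hs
    rw [mem_Ioc] at hr hs
    rw [h0]
    unfold elbow
    rw [if_neg (by omega), if_pos (by omega), if_neg (by omega), if_neg (by omega),
      if_neg (by omega), if_neg (by omega)]
    ring

lemma elbow_val {Z0 : ℕ → ℕ → K} {i j : ℕ} {z : K} (hw : Wt v m n g g')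
    (hG : Good v m n g P Z0 (i + 1) j) (hj : j + 1 ≤ n) (hz : v (g' (i + 1) (j + 1)) ≤ v z)
    {r s : ℕ} (hrs : InL m n (i + 1) j r s) :
    (P r s → v (elbow Z0 i j z r s) = v (g r s)) ∧
      (¬ P r s → v (elbow Z0 i j z r s) < v (g r s)) := by
  unfold elbow
  rw [if_neg (by unfold InL at hrs; omega)]
  by_cases h : i + 1 < r ∧ s < j + 1
  · rw [if_pos h]
    have hcor : v (Z0 r (j + 1) * Z0 (i + 1) s / z) < v (g r s) := by
      apply small_corr hw h.1 hrs.2.1 h.2 hj _ _ hz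
      · apply hG.le; unfold InL at *; omega
      · apply hG.le; unfold InL at *; omega
    constructor
    · intro hp
      have := hG.eqP r s hrs hp
      rw [← this] at hcor ⊢
      exact Valuation.map_add_eq_of_lt_left _ hcor
    · intro hp
      exact Valuation.map_add_lt _ (hG.ltP r s hrs hp) hcor
  · rw [if_neg h]
    exact ⟨hG.eqP r s hrs, hG.ltP r s hrs⟩

lemma InL_cases {i j r s : ℕ} (h : InL m n (i + 1) (j + 1) r s) :
    InL m n (i + 1) j r s ∨ (r = i + 1 ∧ s = j + 1) := by
  unfold InL at *; omega

lemma step_mem {Z0 : ℕ → ℕ → K} {i j : ℕ} (hw : Wt v m n g g')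
    (hG : Good v m n g P Z0 (i + 1) j) (hi : i + 1 ≤ m) (hj : j + 1 ≤ n)
    (hP : P (i + 1) (j + 1)) : ∃ Z, Good v m n g P Z (i + 1) (j + 1) := by
  refine ⟨elbow Z0 i j (g (i + 1) (j + 1)), ?_, ?_, ?_⟩
  · intro r s hrs hp
    rcases InL_cases hrs with h | ⟨rfl, rfl⟩
    · exact (elbow_val hw hG hj (hw.lt _ _).le h).1 hp
    · simp [elbow]
  · intro r s hrs hp
    rcases InL_cases hrs with h | ⟨rfl, rfl⟩
    · exact (elbow_val hw hG hj (hw.lt _ _).le h).2 hp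
    · exact absurd hP hp
  · intro a a' b c hR
    rcases Reg_cases hi hj hR with h | ⟨rfl, rfl, h1, h2, h3, h4⟩
    · exact elbow_old hG hi hj h hR
    · rw [elbow_new (hw.g_ne _ _) h1 h2]
      refine ⟨a + 1, by rw [mem_Ioc]; omega, j + 1, by rw [mem_Ioc]; omega, hP, ?_⟩
      refine HC_mono ?_ ?_ (reg_sub0 hG hj h3 h4)
      · intro x; simp only [mem_Ioc, mem_filter]; omega
      · intro x; simp only [mem_Ioc, mem_filter]; omega

lemma step_not_mem {Z0 : ℕ → ℕ → K} {i j : ℕ} (hw : Wt v m n g g')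
    (hG : Good v m n g P Z0 (i + 1) j) (hi : i + 1 ≤ m) (hj : j + 1 ≤ n)
    (hP : ¬ P (i + 1) (j + 1)) : ∃ Z, Good v m n g P Z (i + 1) (j + 1) := by
  by_cases hex : ∃ a' b, i < a' ∧ b < j + 1 ∧ a' ≤ m ∧ (a' = m ∨ b = 0) ∧
      rk Z0 (Ioc (i + 1) a') (Ioc b (j + 1)) ≤ rk Z0 (Ioc (i + 1) a') (Ioc b j) ∧
      rk Z0 (Ioc i a') (Ioc b j) ≤ rk Z0 (Ioc (i + 1) a') (Ioc b j)
  · obtain ⟨a₁, b₁, h1, h2, h3, h4, h5, h6⟩ := hex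
    rw [Ioc_col h2] at h5
    rw [Ioc_row h1] at h6
    obtain ⟨α, hα⟩ := col_dep Z0 h5
    obtain ⟨β, hβ⟩ := row_dep Z0 h6
    set z := ∑ s ∈ Ioc b₁ j, α s * Z0 (i + 1) s with hz
    have hz' : z = ∑ r ∈ Ioc (i + 1) a₁, β r * Z0 r (j + 1) := by
      rw [hz]
      calc _ = ∑ s ∈ Ioc b₁ j, ∑ r ∈ Ioc (i + 1) a₁, α s * (β r * Z0 r s) := by
            apply sum_congr rfl
            intro s hs
            rw [hβ s hs, mul_sum]
        _ = ∑ r ∈ Ioc (i + 1) a₁, ∑ s ∈ Ioc b₁ j, α s * (β r * Z0 r s) := sum_comm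
        _ = _ := by
            apply sum_congr rfl
            intro r hr
            rw [hα r hr, mul_sum]
            apply sum_congr rfl
            intro s _
            ring
    let Z : ℕ → ℕ → K := fun r s => if r = i + 1 ∧ s = j + 1 then z else Z0 r s
    have hZz : Z (i + 1) (j + 1) = z := by simp [Z]
    have hZ : ∀ r s, ¬ (r = i + 1 ∧ s = j + 1) → Z r s = Z0 r s := fun r s h => by simp [Z, h]
    -- column dependence
    have hcol : ∀ a' b, a' ≤ a₁ → b ≤ b₁ → i < a' → b < j + 1 →
        rk Z (Ioc i a') (Ioc b (j + 1)) ≤ rk Z0 (Ioc i a') (Ioc b j) := by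
      intro a' b ha hb hia hbj
      have e1 : rk Z (Ioc i a') (Ioc b j) = rk Z0 (Ioc i a') (Ioc b j) := by
        apply rk_congr
        intro r hr s hs
        rw [mem_Ioc] at hr hs
        exact hZ r s (by omega)
      rw [← e1, Ioc_col hbj]
      apply rk_le_of_col_dep Z (fun s => if b₁ < s then α s else 0)
      intro r hr
      rw [mem_Ioc] at hr
      have e2 : ∀ x : ℕ → K, ∑ s ∈ Ioc b j, (if b₁ < s then α s else 0) * x s =
          ∑ s ∈ Ioc b₁ j, α s * x s := by
        intro x
        symm
        rw [← sum_subset_zero_on_sdiff (s₁ := Ioc b₁ j) (s₂ := Ioc b j)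
          (f := fun s => α s * x s)]
        · intro s; simp only [mem_Ioc]; omega
        · intro s hs
          simp only [mem_sdiff, mem_Ioc] at hs
          rw [if_neg (by omega), zero_mul]
        · intro s hs
          rw [mem_Ioc] at hs
          rw [if_pos hs.1]
      rw [e2]
      by_cases hri : r = i + 1
      · rw [hri, hZz, hz]
        apply sum_congr rfl
        intro s hs
        rw [mem_Ioc] at hs
        rw [hZ _ _ (by omega)]
      · rw [hZ _ _ (by omega), hα r (by rw [mem_Ioc]; omega)]
        apply sum_congr rfl
        intro s hs
        rw [hZ _ _ (by omega)]
    have hrow : ∀ a' b, a₁ ≤ a' → b₁ ≤ b → i < a' → b < j + 1 →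
        rk Z (Ioc i a') (Ioc b (j + 1)) ≤ rk Z0 (Ioc (i + 1) a') (Ioc b (j + 1)) := by
      intro a' b ha hb hia hbj
      have e1 : rk Z (Ioc (i + 1) a') (Ioc b (j + 1)) =
          rk Z0 (Ioc (i + 1) a') (Ioc b (j + 1)) := by
        apply rk_congr
        intro r hr s hs
        rw [mem_Ioc] at hr hs
        exact hZ r s (by omega)
      rw [← e1, Ioc_row hia]
      apply rk_le_of_row_dep Z (fun r => if r ≤ a₁ then β r else 0)
      intro s hs
      rw [mem_Ioc] at hs
      have e2 : ∀ x : ℕ → K, ∑ r ∈ Ioc (i + 1) a', (if r ≤ a₁ then β r else 0) * x r =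
          ∑ r ∈ Ioc (i + 1) a₁, β r * x r := by
        intro x
        symm
        rw [← sum_subset_zero_on_sdiff (s₁ := Ioc (i + 1) a₁) (s₂ := Ioc (i + 1) a')
          (f := fun s => β s * x s)]
        · intro s; simp only [mem_Ioc]; omega
        · intro s hs
          simp only [mem_sdiff, mem_Ioc] at hs
          rw [if_neg (by omega), zero_mul]
        · intro s hs
          rw [mem_Ioc] at hs
          rw [if_pos hs.2]
      rw [e2]
      by_cases hsj : s = j + 1
      · rw [hsj, hZz, hz']
        apply sum_congr rfl
        intro r hr
        rw [mem_Ioc] at hr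
        rw [hZ _ _ (by omega)]
      · rw [hZ _ _ (by omega), hβ s (by rw [mem_Ioc]; omega)]
        apply sum_congr rfl
        intro r hr
        rw [hZ _ _ (by omega)]
    have hsmall : v z < v (g (i + 1) (j + 1)) := by
      by_contra hcon
      rw [not_lt] at hcon
      have hz0 : z ≠ 0 := by
        intro h0
        rw [h0, map_zero] at hcon
        exact hw.g_ne _ _ ((Valuation.zero_iff v).1 (le_antisymm hcon zero_le))
      let Z1 : ℕ → ℕ → K := fun r s => Z r s - Z r (j + 1) * Z (i + 1) s / Z (i + 1) (j + 1)
      have hs := schur Z Z1 (A := Ioc (i + 1) a₁) (B := Ioc b₁ j) (i := i + 1) (j := j + 1)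
        (by rwa [hZz]) (fun _ _ _ _ => rfl)
      rw [← Ioc_row h1, ← Ioc_col h2] at hs
      have hc := hcol a₁ b₁ le_rfl le_rfl h1 h2
      rw [← Ioc_row h1] at h6
      have hcor : ∀ r ∈ Ioc (i + 1) a₁, ∀ s ∈ Ioc b₁ j,
          v (Z r (j + 1) * Z (i + 1) s / Z (i + 1) (j + 1)) < v (g r s) := by
        intro r hr s hs
        rw [mem_Ioc] at hr hs
        apply small_corr hw (i := i + 1) (j := j + 1) hr.1 (by omega) (by omega) hj
        · rw [hZ _ _ (by omega)]
          apply hG.le; unfold InL; omega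
        · rw [hZ _ _ (by omega)]
          apply hG.le; unfold InL; omega
        · rw [hZz]; exact (hw.lt _ _).le.trans hcon
      have hlb := LB (P := P) hw _ (Ioc (i + 1) a₁) (Ioc b₁ j) Z1
        (fun r hr => by rw [mem_Ioc] at hr; omega) (fun r hr => by rw [mem_Ioc] at hr; omega)
        (fun r hr s hs => by
          refine (Valuation.map_sub v _ _).trans (max_le ?_ (hcor r hr s hs).le)
          rw [mem_Ioc] at hr hs
          rw [hZ _ _ (by omega)]
          apply hG.le; unfold InL; omega)
        (fun r hr s hs hp => by
          have h7 := hcor r hr s hs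
          rw [mem_Ioc] at hr hs
          have h8 := hG.eqP r s (by unfold InL; omega) hp
          rw [← hZ r s (by omega)] at h8
          rw [← h8] at h7 ⊢
          exact Valuation.map_sub_eq_of_lt_left _ h7)
        (reg_sub0 hG hj h3 h4)
      omega
    refine ⟨Z, ?_, ?_, ?_⟩
    · intro r s hrs hp
      rcases InL_cases hrs with h | ⟨rfl, rfl⟩
      · rw [hZ _ _ (by unfold InL at h; omega)]
        exact hG.eqP r s h hp
      · exact absurd hp hP
    · intro r s hrs hp
      rcases InL_cases hrs with h | ⟨rfl, rfl⟩
      · rw [hZ _ _ (by unfold InL at h; omega)]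
        exact hG.ltP r s h hp
      · rwa [hZz]
    · intro a a' b c hR
      rcases Reg_cases hi hj hR with h | ⟨rfl, rfl, g1, g2, g3, g4⟩
      · have : rk Z (Ioc a a') (Ioc b c) = rk Z0 (Ioc a a') (Ioc b c) := by
          apply rk_congr
          intro r hr s hs
          rw [mem_Ioc] at hr hs
          apply hZ
          unfold Reg at h
          omega
        rw [this]
        exact hG.reg a a' b c h
      · have : (a' ≤ a₁ ∧ b ≤ b₁) ∨ (a₁ ≤ a' ∧ b₁ ≤ b) := by omega
        rcases this with ⟨k1, k2⟩ | ⟨k1, k2⟩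
        · refine HC_le (hcol a' b k1 k2 g1 g2) (HC_mono subset_rfl ?_ (reg_subB hG hj g1 g3 g4))
          intro x; simp only [mem_Ioc]; omega
        · refine HC_le (hrow a' b k1 k2 g1 g2) (HC_mono ?_ subset_rfl (reg_subA hG hj g2 g3 g4))
          intro x; simp only [mem_Ioc]; omega
  · push Not at hex
    refine ⟨elbow Z0 i j (g' (i + 1) (j + 1)), ?_, ?_, ?_⟩
    · intro r s hrs hp
      rcases InL_cases hrs with h | ⟨rfl, rfl⟩
      · exact (elbow_val hw hG hj le_rfl h).1 hp
      · exact absurd hp hP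
    · intro r s hrs hp
      rcases InL_cases hrs with h | ⟨rfl, rfl⟩
      · exact (elbow_val hw hG hj le_rfl h).2 hp
      · simp [elbow]; exact hw.lt _ _
    · intro a a' b c hR
      rcases Reg_cases hi hj hR with h | ⟨rfl, rfl, h1, h2, h3, h4⟩
      · exact elbow_old hG hi hj h hR
      · rw [elbow_new (hw.g'_ne _ _) h1 h2]
        by_cases h5 : rk Z0 (Ioc (a + 1) a') (Ioc b (j + 1)) ≤ rk Z0 (Ioc (a + 1) a') (Ioc b j)
        · have h6 := hex a' b h1 h2 h3 h4 h5
          refine HC_le h6 (HC_mono subset_rfl ?_ (reg_subB hG hj h1 h3 h4))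
          intro x; simp only [mem_Ioc]; omega
        · refine HC_le (not_le.1 h5) (HC_mono ?_ subset_rfl (reg_subA hG hj h2 h3 h4))
          intro x; simp only [mem_Ioc]; omega

lemma exists_good_row (hw : Wt v m n g g') {i : ℕ} (hi : i + 1 ≤ m) {Z0 : ℕ → ℕ → K}
    (hG : Good v m n g P Z0 (i + 1) 0) : ∀ j ≤ n, ∃ Z, Good v m n g P Z (i + 1) j
  | 0, _ => ⟨Z0, hG⟩
  | j + 1, hj => by
    obtain ⟨Z, hZ⟩ := exists_good_row hw hi hG j (by omega)
    by_cases hP : P (i + 1) (j + 1)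
    · exact step_mem hw hZ hi hj hP
    · exact step_not_mem hw hZ hi hj hP

lemma exists_good (hw : Wt v m n g g') : ∀ t ≤ m, ∃ Z, Good v m n g P Z (m - t) 0
  | 0, _ => ⟨fun _ _ => 0, by intro r s h; unfold InL at h; omega,
      by intro r s h; unfold InL at h; omega, by intro a a' b c h; unfold Reg at h; omega⟩
  | t + 1, ht => by
    obtain ⟨Z, hZ⟩ := exists_good hw t (by omega)
    obtain ⟨i, hi⟩ : ∃ i, m - t = i + 1 := ⟨m - t - 1, by omega⟩
    rw [hi] at hZ
    obtain ⟨Z', hZ'⟩ := exists_good_row hw (by omega) hZ n le_rfl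
    have : m - (t + 1) = i := by omega
    rw [this]
    refine ⟨Z', fun r s h => hZ'.eqP r s ?_, fun r s h => hZ'.ltP r s ?_,
      fun a a' b c h => hZ'.reg a a' b c ?_⟩
    · unfold InL at *; omega
    · unfold InL at *; omega
    · unfold Reg at *; omega

/-- The key construction. -/
lemma exists_special (hw : Wt v m n g g') (P : ℕ → ℕ → Prop) : ∃ Z : ℕ → ℕ → K,
    (∀ r s, 1 ≤ r → r ≤ m → 1 ≤ s → s ≤ n → P r s → v (Z r s) = v (g r s)) ∧
    (∀ r s, 1 ≤ r → r ≤ m → 1 ≤ s → s ≤ n → ¬ P r s → v (Z r s) < v (g r s)) ∧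
    (∀ a a' b c, a < a' → b < c → a' ≤ m → c ≤ n → (a = 0 ∨ c = n) → (a' = m ∨ b = 0) →
      HC P (rk Z (Ioc a a') (Ioc b c)) (Ioc a a') (Ioc b c)) := by
  obtain ⟨Z, hZ⟩ := exists_good (P := P) hw m le_rfl
  rw [Nat.sub_self] at hZ
  refine ⟨Z, fun r s _ _ _ _ => hZ.eqP r s ?_, fun r s _ _ _ _ => hZ.ltP r s ?_,
      fun a a' b c _ _ _ _ _ _ => hZ.reg a a' b c ?_⟩
  · unfold InL at *; omega
  · unfold InL at *; omega
  · unfold Reg at *; omega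
end Val
end KD

namespace KD
open Finset GCS

lemma lexRank_lt_iff {m n : ℕ} (q p : Fin m × Fin n) :
    lexRank m n q < lexRank m n p ↔ q.1 < p.1 ∨ (q.1 = p.1 ∧ p.2 < q.2) := by
  obtain ⟨⟨a, ha⟩, ⟨b, hb⟩⟩ := q
  obtain ⟨⟨c, hc⟩, ⟨d, hd⟩⟩ := p
  simp only [lexRank, Fin.mk_lt_mk, Fin.mk.injEq]
  rcases lt_trichotomy a c with h | rfl | h
  · have : (a + 1) * n ≤ c * n := Nat.mul_le_mul_right _ h
    rw [add_mul] at this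
    omega
  · omega
  · have : (c + 1) * n ≤ a * n := Nat.mul_le_mul_right _ h
    rw [add_mul] at this
    omega

/-- exponent of the weight -/
def ee (m n i j : ℕ) : ℕ := (m - i) * (n + 1) + j

lemma ee_lt {m n i r c j : ℕ} (hir : i < r) (hr : r ≤ m) (hj : j ≤ n) :
    ee m n r j < ee m n i c := by
  unfold ee
  have : (m - r + 1) * (n + 1) ≤ (m - i) * (n + 1) := Nat.mul_le_mul_right _ (by omega)
  rw [add_mul] at this
  omega

lemma monge_w {m n N i r c j : ℕ} (hN : 4 ≤ N) (hir : i < r) (hr : r ≤ m) (hc : c < j)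
    (hj : j ≤ n) : N ^ ee m n r j + N ^ ee m n i c + 2 ≤ N ^ ee m n i j := by
  obtain ⟨e, he⟩ : ∃ e, ee m n i j = e + 1 := ⟨ee m n i j - 1, by unfold ee; omega⟩
  have h1 : ee m n r j ≤ e := by have := ee_lt (c := j) hir hr hj; omega
  have h2 : ee m n i c ≤ e := by unfold ee at *; omega
  have h3 := Nat.pow_le_pow_right (show 0 < N by omega) h1
  have h4 := Nat.pow_le_pow_right (show 0 < N by omega) h2
  have h5 : 0 < N ^ e := Nat.pow_pos (by omega)
  rw [he, pow_succ]
  nlinarith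

/-- weight of a cell -/
def wt (N : ℕ) {m n : ℕ} (p : Fin m × Fin n) : ℕ := N ^ ee m n (p.1.1 + 1) (p.2.1 + 1)

lemma ee_inj {m n : ℕ} : Function.Injective
    (fun p : Fin m × Fin n => ee m n (p.1.1 + 1) (p.2.1 + 1)) := by
  intro p q h
  simp only at h
  have hp := p.2.isLt
  have hq := q.2.isLt
  have hp1 := p.1.isLt
  have hq1 := q.1.isLt
  rcases lt_trichotomy p.1.1 q.1.1 with h1 | h1 | h1
  · have := ee_lt (m := m) (n := n) (i := p.1.1 + 1) (r := q.1.1 + 1) (c := p.2.1 + 1)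
      (j := q.2.1 + 1) (by omega) (by omega) (by omega)
    omega
  · unfold ee at h
    rw [h1] at h
    exact Prod.ext (Fin.ext h1) (Fin.ext (by omega))
  · have := ee_lt (m := m) (n := n) (i := q.1.1 + 1) (r := p.1.1 + 1) (c := q.2.1 + 1)
      (j := p.2.1 + 1) (by omega) (by omega) (by omega)
    omega

lemma ee_lt_of {m n : ℕ} {p q : Fin m × Fin n} (hne : q ≠ p)
    (h : ¬ lexRank m n q < lexRank m n p) :
    ee m n (q.1.1 + 1) (q.2.1 + 1) < ee m n (p.1.1 + 1) (p.2.1 + 1) := by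
  rw [lexRank_lt_iff] at h
  push Not at h
  obtain ⟨h1, h2⟩ := h
  rcases lt_or_eq_of_le h1 with h3 | h3
  · apply ee_lt
    · have : p.1.1 < q.1.1 := h3
      omega
    · omega
    · omega
  · have h4 := h2 h3.symm
    have : q.2 ≠ p.2 := fun h5 => hne (Prod.ext h3.symm h5)
    have h6 : q.2 < p.2 := lt_of_le_of_ne h4 this
    rw [h3]
    unfold ee
    have : q.2.1 < p.2.1 := h6
    omega

lemma sum_pow_lt {N : ℕ} (hN : 1 ≤ N) (t : ℕ) : ∑ e ∈ range t, (N - 1) * N ^ e < N ^ t := by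
  induction t with
  | zero => simp
  | succ t ih =>
    rw [sum_range_succ, pow_succ]
    obtain ⟨M, rfl⟩ : ∃ M, N = M + 1 := ⟨N - 1, by omega⟩
    simp at ih ⊢
    nlinarith

lemma lex_wt {m n N : ℕ} {s u : (Fin m × Fin n) →₀ ℕ} (hN : 1 ≤ N)
    (hs : ∀ p, s p < N) {p : Fin m × Fin n} (hp : s p < u p)
    (hq : ∀ q, lexRank m n q < lexRank m n p → s q = u q) :
    ∑ q, s q * wt N q < ∑ q, u q * wt N q := by
  classical
  rw [← sum_filter_add_sum_filter_not univ (fun q => lexRank m n q < lexRank m n p)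
    (fun q => s q * wt N q), ← sum_filter_add_sum_filter_not univ
    (fun q => lexRank m n q < lexRank m n p) (fun q => u q * wt N q)]
  have h1 : ∑ q ∈ univ.filter (fun q => lexRank m n q < lexRank m n p), s q * wt N q =
      ∑ q ∈ univ.filter (fun q => lexRank m n q < lexRank m n p), u q * wt N q := by
    apply sum_congr rfl
    intro q h
    rw [mem_filter] at h
    rw [hq q h.2]
  rw [h1]
  apply Nat.add_lt_add_left
  set S := univ.filter (fun q => ¬ lexRank m n q < lexRank m n p) with hS
  have hpS : p ∈ S := by simp [hS]
  rw [← add_sum_erase S _ hpS, ← add_sum_erase S (fun q => u q * wt N q) hpS]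
  have h2 : ∑ q ∈ S.erase p, s q * wt N q < wt N p := by
    calc ∑ q ∈ S.erase p, s q * wt N q
        ≤ ∑ q ∈ S.erase p, (N - 1) * wt N q := by
          apply sum_le_sum
          intro q _
          apply Nat.mul_le_mul_right
          have := hs q
          omega
      _ = ∑ e ∈ (S.erase p).image (fun q : Fin m × Fin n => ee m n (q.1.1 + 1) (q.2.1 + 1)),
            (N - 1) * N ^ e := by
          rw [sum_image (fun a _ b _ h => ee_inj h)]
          rfl
      _ ≤ ∑ e ∈ range (ee m n (p.1.1 + 1) (p.2.1 + 1)), (N - 1) * N ^ e := by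
          apply sum_le_sum_of_subset
          intro e he
          rw [mem_image] at he
          obtain ⟨q, hq1, rfl⟩ := he
          rw [mem_erase, hS, mem_filter] at hq1
          rw [mem_range]
          exact ee_lt_of hq1.1 hq1.2.2
      _ < N ^ (ee m n (p.1.1 + 1) (p.2.1 + 1)) := sum_pow_lt hN _
      _ = wt N p := rfl
  calc s p * wt N p + ∑ q ∈ S.erase p, s q * wt N q < s p * wt N p + wt N p := by omega
    _ = (s p + 1) * wt N p := by ring
    _ ≤ u p * wt N p := Nat.mul_le_mul_right _ hp
    _ ≤ _ := Nat.le_add_right _ _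

open WithZero Classical in
lemma wt_struct {m n N : ℕ} (hN : 4 ≤ N) :
    Wt (RatFunc.inftyValuation ℂ) m n
      (fun i j => (RatFunc.X : RatFunc ℂ) ^ ((N ^ ee m n i j : ℕ) : ℤ))
      (fun i j => (RatFunc.X : RatFunc ℂ) ^ (((N ^ ee m n i j : ℕ) : ℤ) - 1)) := by
  refine ⟨fun i j => zpow_ne_zero _ RatFunc.X_ne_zero, fun i j => zpow_ne_zero _ RatFunc.X_ne_zero,
    fun i j => ?_, fun i r c j hir hr hcj hj => ?_⟩
  · rw [RatFunc.inftyValuation.X_zpow, RatFunc.inftyValuation.X_zpow, exp_lt_exp]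
    omega
  · simp only [RatFunc.inftyValuation.X_zpow]
    rw [← exp_add, ← exp_add, exp_lt_exp]
    have := monge_w (n := n) hN hir hr hcj hj
    omega

open WithZero Classical in
lemma eval_ne_zero {m n N : ℕ} (hN : 4 ≤ N) (f : MvPolynomial (Fin m × Fin n) ℂ)
    (u : (Fin m × Fin n) →₀ ℕ) (hu : u ∈ f.support)
    (hb : ∀ s ∈ f.support, ∀ p, s p < N)
    (hlt : ∀ s ∈ f.support, s ≠ u → ∃ p, s p < u p ∧
      ∀ q, lexRank m n q < lexRank m n p → s q = u q)
    (z : Fin m × Fin n → RatFunc ℂ)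
    (hz1 : ∀ p, u p ≠ 0 → RatFunc.inftyValuation ℂ (z p) = exp ((wt N p : ℕ) : ℤ))
    (hz2 : ∀ p, RatFunc.inftyValuation ℂ (z p) ≤ exp ((wt N p : ℕ) : ℤ)) :
    MvPolynomial.eval₂ (RatFunc.C : ℂ →+* RatFunc ℂ) z f ≠ 0 := by
  set v := RatFunc.inftyValuation ℂ with hv
  have hexp : ∀ s : (Fin m × Fin n) →₀ ℕ,
      ∏ p, (exp ((wt N p : ℕ) : ℤ)) ^ s p = exp (((∑ p, s p * wt N p : ℕ)) : ℤ) := by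
    intro s
    have hgen : ∀ S : Finset (Fin m × Fin n), ∏ p ∈ S, (exp ((wt N p : ℕ) : ℤ)) ^ s p =
        exp (((∑ p ∈ S, s p * wt N p : ℕ)) : ℤ) := by
      intro S
      induction S using Finset.induction_on with
      | empty => simp
      | insert p S hp ih =>
        rw [prod_insert hp, sum_insert hp, ih, ← exp_nsmul, ← exp_add]
        simp
    exact hgen univ
  have hterm : ∀ s ∈ f.support, v (RatFunc.C (f.coeff s) * ∏ p, z p ^ s p) =
      ∏ p, v (z p) ^ s p := by
    intro s hs
    rw [map_mul, hv, RatFunc.inftyValuation.C _ (MvPolynomial.mem_support_iff.1 hs), one_mul,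
      map_prod]
    simp
  have hU : v (RatFunc.C (f.coeff u) * ∏ p, z p ^ u p) =
      exp (((∑ p, u p * wt N p : ℕ)) : ℤ) := by
    rw [hterm u hu, ← hexp]
    apply prod_congr rfl
    intro p _
    by_cases h : u p = 0
    · simp [h]
    · rw [hz1 p h]
  rw [MvPolynomial.eval₂_eq', ← add_sum_erase _ _ hu]
  intro h0
  have hlt2 : v (∑ s ∈ f.support.erase u, RatFunc.C (f.coeff s) * ∏ p, z p ^ s p) <
      v (RatFunc.C (f.coeff u) * ∏ p, z p ^ u p) := by
    apply Valuation.map_sum_lt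
    · rw [hU]; exact exp_ne_zero
    · intro s hs
      rw [mem_erase] at hs
      rw [hterm s hs.2, hU]
      refine lt_of_le_of_lt (b := ∏ p, (exp ((wt N p : ℕ) : ℤ)) ^ s p) ?_ ?_
      · apply prod_le_prod'
        intro p _
        exact pow_le_pow_left' (hz2 p) _
      · rw [hexp, exp_lt_exp]
        obtain ⟨p, hp, hq⟩ := hlt s hs.2 hs.1
        exact_mod_cast lex_wt (by omega) (hb s hs.2) hp hq
  have h3 := Valuation.map_add_eq_of_lt_left v hlt2
  rw [h0, hU, map_zero] at h3
  exact exp_ne_zero h3.symm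

lemma antidiagExp_le {m n d : ℕ} {r : Fin d → Fin m} {c : Fin d → Fin n}
    (hr : Function.Injective r) (u : (Fin m × Fin n) →₀ ℕ) :
    antidiagExp m n d r c ≤ u ↔ ∀ i : Fin d, u (r i, c i.rev) ≠ 0 := by
  classical
  unfold antidiagExp
  constructor
  · intro h i
    have h1 := h (r i, c i.rev)
    rw [Finsupp.finsetSum_apply] at h1
    have h2 : 1 ≤ ∑ k : Fin d, (Finsupp.single (r k, c k.rev) 1 : (Fin m × Fin n) →₀ ℕ)
        (r i, c i.rev) := by
      refine le_trans (le_of_eq ?_) (single_le_sum (fun _ _ => Nat.zero_le _) (mem_univ i))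
      simp
    omega
  · intro h p
    rw [Finsupp.finsetSum_apply]
    by_cases hp : ∃ i : Fin d, (r i, c i.rev) = p
    · obtain ⟨i, rfl⟩ := hp
      rw [sum_eq_single i]
      · have := h i
        simp
        omega
      · intro k _ hk
        rw [Finsupp.single_apply, if_neg]
        intro h2
        exact hk (hr (congrArg Prod.fst h2))
      · simp
    · push Not at hp
      rw [sum_eq_zero]
      · exact Nat.zero_le _
      · intro i _
        rw [Finsupp.single_apply, if_neg (hp i)]

/-- the cells of the support of `u` -/
def cells {m n : ℕ} (u : (Fin m × Fin n) →₀ ℕ) (r s : ℕ) : Prop :=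
  ∃ p : Fin m × Fin n, u p ≠ 0 ∧ p.1.1 + 1 = r ∧ p.2.1 + 1 = s

lemma HC_chain {m n : ℕ} (u : (Fin m × Fin n) →₀ ℕ) : ∀ (d : ℕ) (A B : Finset ℕ),
    HC (cells u) d A B → ∃ (r : Fin d → Fin m) (c : Fin d → Fin n),
      StrictMono r ∧ StrictAnti c ∧ (∀ i, (r i).1 + 1 ∈ A) ∧ (∀ i, (c i).1 + 1 ∈ B) ∧
      ∀ i, u (r i, c i) ≠ 0
  | 0, _, _, _ => ⟨Fin.elim0, Fin.elim0, fun i => i.elim0, fun i => i.elim0, fun i => i.elim0,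
      fun i => i.elim0, fun i => i.elim0⟩
  | d + 1, A, B, ⟨i, hi, j, hj, ⟨p, hp, h1, h2⟩, h⟩ => by
    obtain ⟨r, c, hr, hc, hA, hB, hu⟩ := HC_chain u d _ _ h
    subst h1
    subst h2
    simp only [mem_filter] at hA hB
    refine ⟨Fin.cons p.1 r, Fin.cons p.2 c, ?_, ?_, ?_, ?_, ?_⟩
    · intro x y
      refine Fin.cases ?_ (fun x => ?_) x
      · refine Fin.cases ?_ (fun y => ?_) y
        · intro h; exact absurd h (lt_irrefl _)
        · intro _
          have := (hA y).2
          simp only [Fin.cons_zero, Fin.cons_succ, Fin.lt_def]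
          omega
      · refine Fin.cases ?_ (fun y => ?_) y
        · intro h; exact absurd h (Fin.not_lt_zero _)
        · intro h
          simpa using hr (Fin.succ_lt_succ_iff.1 h)
    · intro x y
      refine Fin.cases ?_ (fun x => ?_) x
      · refine Fin.cases ?_ (fun y => ?_) y
        · intro h; exact absurd h (lt_irrefl _)
        · intro _
          have := (hB y).2
          simp only [Fin.cons_zero, Fin.cons_succ, Fin.lt_def]
          omega
      · refine Fin.cases ?_ (fun y => ?_) y
        · intro h; exact absurd h (Fin.not_lt_zero _)
        · intro h
          simpa using hc (Fin.succ_lt_succ_iff.1 h)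
    · intro k
      refine Fin.cases ?_ (fun k => ?_) k
      · simpa using hi
      · simpa using (hA k).1
    · intro k
      refine Fin.cases ?_ (fun k => ?_) k
      · simpa using hj
      · simpa using (hB k).1
    · intro k
      refine Fin.cases ?_ (fun k => ?_) k
      · simpa using hp
      · simpa using hu k
end KD

namespace KD
open Finset GCS

/-- exponent of the term of a minor given by the permutation `σ` -/
noncomputable def permExp {m n d : ℕ} (r : Fin d → Fin m) (c : Fin d → Fin n)
    (σ : Equiv.Perm (Fin d)) : (Fin m × Fin n) →₀ ℕ :=
  ∑ i : Fin d, Finsupp.single (r i, c (σ i)) 1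

lemma permExp_apply {m n d : ℕ} {r : Fin d → Fin m} {c : Fin d → Fin n}
    (hr : Function.Injective r) (hc : Function.Injective c) (σ : Equiv.Perm (Fin d))
    (a b : Fin d) : permExp r c σ (r a, c b) = if σ a = b then 1 else 0 := by
  classical
  unfold permExp
  rw [Finsupp.finsetSum_apply, sum_eq_single a]
  · rw [Finsupp.single_apply]
    congr 1
    simp [hc.eq_iff]
  · intro k _ hk
    rw [Finsupp.single_apply, if_neg]
    intro h
    exact hk (hr (congrArg Prod.fst h))
  · simp

lemma permExp_apply_zero {m n d : ℕ} {r : Fin d → Fin m} {c : Fin d → Fin n}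
    (σ : Equiv.Perm (Fin d)) (q : Fin m × Fin n) (hq : ∀ a b, (r a, c b) ≠ q) :
    permExp r c σ q = 0 := by
  classical
  unfold permExp
  rw [Finsupp.finsetSum_apply, sum_eq_zero]
  intro k _
  rw [Finsupp.single_apply, if_neg (hq _ _)]

lemma permExp_inj {m n d : ℕ} {r : Fin d → Fin m} {c : Fin d → Fin n}
    (hr : Function.Injective r) (hc : Function.Injective c) :
    Function.Injective (permExp r c) := by
  intro σ τ h
  ext1 a
  have h1 := DFunLike.congr_fun h (r a, c (σ a))
  rw [permExp_apply hr hc, permExp_apply hr hc, if_pos rfl] at h1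
  by_contra h2
  rw [if_neg (fun h => h2 h.symm)] at h1
  exact one_ne_zero h1

lemma genMinor_eq {m n d : ℕ} (r : Fin d → Fin m) (c : Fin d → Fin n) :
    genMinor m n d r c = ∑ σ : Equiv.Perm (Fin d),
      MvPolynomial.monomial (permExp r c σ) ((Equiv.Perm.sign σ : ℤ) : ℂ) := by
  unfold genMinor
  rw [← Matrix.det_transpose, Matrix.det_apply']
  apply sum_congr rfl
  intro σ _
  simp only [Matrix.transpose_apply, Matrix.of_apply]
  have : (∏ i : Fin d, (MvPolynomial.X (r i, c (σ i)) : MvPolynomial (Fin m × Fin n) ℂ)) =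
      MvPolynomial.monomial (permExp r c σ) 1 := by
    unfold permExp
    rw [MvPolynomial.monomial_sum_one]
    rfl
  rw [this]
  have h2 : (((Equiv.Perm.sign σ : ℤ) : MvPolynomial (Fin m × Fin n) ℂ)) =
      MvPolynomial.C ((Equiv.Perm.sign σ : ℤ) : ℂ) := by simp
  rw [h2, MvPolynomial.C_mul_monomial, mul_one]

lemma isAntidiagonal {m n : ℕ} {ord : TermOrder (Fin m × Fin n)} (hord : IsAntidiagLex m n ord)
    (d : ℕ) (r : Fin d → Fin m) (c : Fin d → Fin n) (hr : StrictMono r) (hc : StrictMono c) :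
    IsInitExp ord (genMinor m n d r c) (antidiagExp m n d r c) := by
  classical
  have hanti : antidiagExp m n d r c = permExp r c Fin.revPerm := rfl
  rw [hanti, genMinor_eq]
  constructor
  · rw [MvPolynomial.mem_support_iff, MvPolynomial.coeff_sum, sum_eq_single Fin.revPerm]
    · rw [MvPolynomial.coeff_monomial, if_pos rfl]
      simp
    · intro σ _ hσ
      rw [MvPolynomial.coeff_monomial, if_neg]
      intro h
      exact hσ (permExp_inj hr.injective hc.injective h)
    · simp
  · intro w hw
    have h1 := MvPolynomial.support_sum hw
    rw [mem_biUnion] at h1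
    obtain ⟨σ, -, h2⟩ := h1
    have h3 := MvPolynomial.support_monomial_subset h2
    rw [mem_singleton] at h3
    rw [h3, hord]
    by_cases hσ : σ = Fin.revPerm
    · left; rw [hσ]
    right
    have hex : ∃ a, σ a ≠ a.rev := by
      by_contra hcon
      push Not at hcon
      exact hσ (Equiv.ext hcon)
    obtain ⟨a, ha, hmin⟩ : ∃ a, σ a ≠ a.rev ∧ ∀ b < a, σ b = b.rev := by
      have hne : (univ.filter (fun a => σ a ≠ a.rev)).Nonempty := by
        obtain ⟨a, ha⟩ := hex
        exact ⟨a, by simpa using ha⟩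
      refine ⟨_, (mem_filter.1 (min'_mem _ hne)).2, ?_⟩
      intro b hb
      by_contra hcon
      exact absurd (min'_le _ b (by simpa using hcon)) (not_le.2 hb)
    have hlt : σ a < a.rev := by
      rcases lt_or_ge (σ a) a.rev with h | h
      · exact h
      · exfalso
        have h4 : a.rev < σ a := lt_of_le_of_ne h (Ne.symm ha)
        have h5 : (σ a).rev < a := by rw [← Fin.rev_lt_rev, Fin.rev_rev]; exact h4
        have h6 := hmin _ h5
        rw [Fin.rev_rev] at h6
        have h7 := σ.injective h6
        rw [h7] at h5
        exact lt_irrefl _ h5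
    refine ⟨(r a, c a.rev), ?_, ?_⟩
    · rw [permExp_apply hr.injective hc.injective, permExp_apply hr.injective hc.injective,
        if_neg ha, if_pos (show Fin.revPerm a = a.rev from rfl)]
      exact one_pos
    · intro q hq
      by_cases him : ∃ a' b', (r a', c b') = q
      · obtain ⟨a', b', rfl⟩ := him
        rw [lexRank_lt_iff] at hq
        simp only [hr.lt_iff_lt, hc.lt_iff_lt, hr.injective.eq_iff] at hq
        rw [permExp_apply hr.injective hc.injective, permExp_apply hr.injective hc.injective]
        rcases hq with hq | ⟨rfl, hq⟩
        · rw [hmin _ hq]; rfl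
        · rw [if_neg (hlt.trans hq).ne, if_neg]
          exact hq.ne
      · push Not at him
        rw [permExp_apply_zero σ q him, permExp_apply_zero _ q him]

lemma init_unique {σ : Type} {ord : TermOrder σ} {f : MvPolynomial σ ℂ} {u w : σ →₀ ℕ}
    (hu : IsInitExp ord f u) (hw : IsInitExp ord f w) : u = w :=
  ord.le_antisymm _ _ (hw.2 u hu.1) (hu.2 w hw.1)

/-- a chain in the `i`-th region -/
def InReg {m n : ℕ} (a a' b b' d : ℕ) (r : Fin d → Fin m) (c : Fin d → Fin n) : Prop :=
  StrictMono r ∧ StrictMono c ∧ (∀ i, a ≤ (r i).1 + 1 ∧ (r i).1 + 1 ≤ a') ∧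
    (∀ j, b ≤ (c j).1 + 1 ∧ (c j).1 + 1 ≤ b')

open Classical WithZero in
lemma key {m n k : ℕ} {a a' b b' d : Fin k → ℕ}
    (hbnd : ∀ i, 1 ≤ a i ∧ a i ≤ a' i ∧ a' i ≤ m ∧ 1 ≤ b i ∧ b i ≤ b' i ∧ b' i ≤ n)
    (hform : ∀ i, (a i = 1 ∧ b i = 1) ∨ (a' i = m ∧ b' i = n) ∨
      (a i = 1 ∧ a' i = m) ∨ (b i = 1 ∧ b' i = n))
    {ord : TermOrder (Fin m × Fin n)} (hord : IsAntidiagLex m n ord)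
    {f : MvPolynomial (Fin m × Fin n) ℂ}
    (hf : f ∈ Ideal.span (⋃ i, minorsOfSub m n (a i) (a' i) (b i) (b' i) (d i)))
    {u : (Fin m × Fin n) →₀ ℕ} (hu : IsInitExp ord f u) :
    ∃ i, ∃ (r : Fin (d i) → Fin m) (c : Fin (d i) → Fin n),
      InReg (a i) (a' i) (b i) (b' i) (d i) r c ∧ antidiagExp m n (d i) r c ≤ u := by
  by_contra hcon
  push Not at hcon
  set N : ℕ := 4 + ∑ s ∈ f.support, ∑ p, s p with hN
  have hb : ∀ s ∈ f.support, ∀ p, s p < N := by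
    intro s hs p
    have h1 : s p ≤ ∑ p, s p := single_le_sum (fun _ _ => Nat.zero_le _) (mem_univ p)
    have h2 : ∑ p, s p ≤ ∑ s ∈ f.support, ∑ p, s p :=
      single_le_sum (f := fun s : (Fin m × Fin n) →₀ ℕ => ∑ p, s p) (fun _ _ => Nat.zero_le _) hs
    omega
  obtain ⟨Z, hZ1, hZ2, hZ3⟩ := exists_special (wt_struct (m := m) (n := n) (N := N) (by omega))
    (cells u)
  simp only [RatFunc.inftyValuation.X_zpow] at hZ1 hZ2
  let z : Fin m × Fin n → RatFunc ℂ := fun p => Z (p.1.1 + 1) (p.2.1 + 1)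
  have hz1 : ∀ p, u p ≠ 0 → RatFunc.inftyValuation ℂ (z p) = exp ((wt N p : ℕ) : ℤ) := by
    intro p hp
    exact hZ1 _ _ (by omega) (by omega) (by omega) (by omega) ⟨p, hp, rfl, rfl⟩
  have hz2 : ∀ p, RatFunc.inftyValuation ℂ (z p) ≤ exp ((wt N p : ℕ) : ℤ) := by
    intro p
    by_cases hp : u p ≠ 0
    · exact (hz1 p hp).le
    · refine (hZ2 _ _ (by omega) (by omega) (by omega) (by omega) ?_).le
      rintro ⟨q, hq, h1, h2⟩
      have : q = p := Prod.ext (Fin.ext (by omega)) (Fin.ext (by omega))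
      rw [this] at hq
      exact hp hq
  refine eval_ne_zero (N := N) (by omega) f u hu.1 hb ?_ z hz1 hz2 ?_
  · intro s hs hne
    rcases (hord s u).1 (hu.2 s hs) with h | h
    · exact absurd h hne
    · exact h
  · have hker : Ideal.span (⋃ i, minorsOfSub m n (a i) (a' i) (b i) (b' i) (d i)) ≤
        RingHom.ker (MvPolynomial.eval₂Hom (RatFunc.C : ℂ →+* RatFunc ℂ) z) := by
      rw [Ideal.span_le]
      intro p hp
      rw [Set.mem_iUnion] at hp
      obtain ⟨i, r, c, hr, hc, hra, hcb, rfl⟩ := hp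
      rw [SetLike.mem_coe, RingHom.mem_ker]
      unfold genMinor
      rw [RingHom.map_det]
      by_contra hdet
      have hrank := Matrix.rank_of_det_ne_zero hdet
      rw [Fintype.card_fin] at hrank
      have hbi := hbnd i
      have hle : d i ≤ rk Z (Ioc (a i - 1) (a' i)) (Ioc (b i - 1) (b' i)) := by
        rw [← hrank]
        unfold rk
        have := Matrix.rank_submatrix_le (Matrix.of fun (r : Ioc (a i - 1) (a' i))
          (c : Ioc (b i - 1) (b' i)) => Z r c)
          (fun k : Fin (d i) => (⟨(r k).1 + 1, by
            have := hra k
            rw [mem_Ioc]; omega⟩ : Ioc (a i - 1) (a' i)))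
          (fun k : Fin (d i) => (⟨(c k).1 + 1, by
            have := hcb k
            rw [mem_Ioc]; omega⟩ : Ioc (b i - 1) (b' i)))
        refine le_trans (le_of_eq ?_) this
        congr 1
        ext x y
        simp [z]
      have hfi := hform i
      have hHC := HC_le hle (hZ3 (a i - 1) (a' i) (b i - 1) (b' i) (by omega) (by omega)
        (by omega) (by omega) (by omega) (by omega))
      obtain ⟨r', c', h1, h2, h3, h4, h5⟩ := HC_chain u _ _ _ hHC
      refine hcon i r' (c' ∘ Fin.rev) ⟨h1, ?_, ?_, ?_⟩ ?_
      · intro x y hxy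
        exact h2 (Fin.rev_lt_rev.2 hxy)
      · intro x
        have := h3 x
        rw [mem_Ioc] at this
        omega
      · intro x
        have := h4 x.rev
        rw [mem_Ioc] at this
        simp only [Function.comp]
        omega
      · rw [antidiagExp_le h1.injective]
        intro x
        simpa using h5 x
    exact hker hf

lemma groebner {m n k : ℕ} {a a' b b' d : Fin k → ℕ}
    (hbnd : ∀ i, 1 ≤ a i ∧ a i ≤ a' i ∧ a' i ≤ m ∧ 1 ≤ b i ∧ b i ≤ b' i ∧ b' i ≤ n)
    (hform : ∀ i, (a i = 1 ∧ b i = 1) ∨ (a' i = m ∧ b' i = n) ∨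
      (a i = 1 ∧ a' i = m) ∨ (b i = 1 ∧ b' i = n))
    {G : Set (MvPolynomial (Fin m × Fin n) ℂ)}
    (hG : G = ⋃ i, minorsOfSub m n (a i) (a' i) (b i) (b' i) (d i))
    {ord : TermOrder (Fin m × Fin n)} (hord : IsAntidiagLex m n ord) :
    IsGroebnerBasis ord (Ideal.span G) G := by
  refine ⟨Ideal.subset_span, le_antisymm ?_ ?_⟩
  · unfold initialIdeal
    rw [Ideal.span_le]
    rintro p ⟨f, hf, u, hu, rfl⟩
    subst hG
    obtain ⟨i, r, c, ⟨h1, h2, h3, h4⟩, hle⟩ := key hbnd hform hord hf hu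
    have hmem : MvPolynomial.monomial (antidiagExp m n (d i) r c) (1 : ℂ) ∈
        Ideal.span {p | ∃ g ∈ ⋃ i, minorsOfSub m n (a i) (a' i) (b i) (b' i) (d i),
          ∃ u, IsInitExp ord g u ∧ p = MvPolynomial.monomial u (1 : ℂ)} := by
      apply Ideal.subset_span
      refine ⟨genMinor m n (d i) r c, Set.mem_iUnion.2 ⟨i, r, c, h1, h2, h3, h4, rfl⟩, _,
        isAntidiagonal hord _ r c h1 h2, rfl⟩
    have := Ideal.mul_mem_left _
      (MvPolynomial.monomial (u - antidiagExp m n (d i) r c) (1 : ℂ)) hmem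
    rw [MvPolynomial.monomial_mul, one_mul, tsub_add_cancel_of_le hle] at this
    exact this
  · apply Ideal.span_mono
    rintro p ⟨g, hg, u, hu, rfl⟩
    exact ⟨g, Ideal.subset_span hg, u, hu, rfl⟩

lemma matLT_iff {m n k : ℕ} {a a' b b' d : Fin k → ℕ}
    (hbnd : ∀ i, 1 ≤ a i ∧ a i ≤ a' i ∧ a' i ≤ m ∧ 1 ≤ b i ∧ b i ≤ b' i ∧ b' i ≤ n)
    (hform : ∀ i, (a i = 1 ∧ b i = 1) ∨ (a' i = m ∧ b' i = n) ∨
      (a i = 1 ∧ a' i = m) ∨ (b i = 1 ∧ b' i = n))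
    {ord : TermOrder (Fin m × Fin n)} (hord : IsAntidiagLex m n ord)
    {M : Matrix (Fin m) (Fin n) ℕ}
    (hM : M ∈ matLT ord (Ideal.span
      (⋃ i, minorsOfSub m n (a i) (a' i) (b i) (b' i) (d i)))) :
    ∃ i, ∃ (r : Fin (d i) → Fin m) (c : Fin (d i) → Fin n),
      InReg (a i) (a' i) (b i) (b' i) (d i) r c ∧ ∀ x, M (r x) (c x.rev) ≠ 0 := by
  unfold matLT initialIdeal at hM
  rw [Set.mem_ofPred_eq] at hM
  have hset : {p | ∃ f ∈ Ideal.span (⋃ i, minorsOfSub m n (a i) (a' i) (b i) (b' i) (d i)),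
      ∃ u, IsInitExp ord f u ∧ p = MvPolynomial.monomial u (1 : ℂ)} =
      (fun u => MvPolynomial.monomial u (1 : ℂ)) '' {u | ∃ f ∈ Ideal.span
        (⋃ i, minorsOfSub m n (a i) (a' i) (b i) (b' i) (d i)), IsInitExp ord f u} := by
    ext p
    constructor
    · rintro ⟨f, hf, u, hu, rfl⟩
      exact ⟨u, ⟨f, hf, hu⟩, rfl⟩
    · rintro ⟨u, ⟨f, hf, hu⟩, rfl⟩
      exact ⟨f, hf, u, hu, rfl⟩
  rw [hset, MvPolynomial.mem_ideal_span_monomial_image] at hM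
  obtain ⟨u, ⟨f, hf, hu⟩, hle⟩ := hM (expOf M) (by
    classical
    rw [MvPolynomial.mem_support_iff, MvPolynomial.coeff_monomial, if_pos rfl]
    exact one_ne_zero)
  obtain ⟨i, r, c, h1, h2⟩ := key hbnd hform hord hf hu
  refine ⟨i, r, c, h1, fun x => ?_⟩
  exact (antidiagExp_le h1.1.injective _).1 (h2.trans hle) x

lemma matLT_of {m n : ℕ} {I : Ideal (MvPolynomial (Fin m × Fin n) ℂ)}
    {ord : TermOrder (Fin m × Fin n)} (hord : IsAntidiagLex m n ord)
    {M : Matrix (Fin m) (Fin n) ℕ} {d : ℕ} {r : Fin d → Fin m} {c : Fin d → Fin n}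
    (hr : StrictMono r) (hc : StrictMono c) (hI : genMinor m n d r c ∈ I)
    (hM : ∀ x, M (r x) (c x.rev) ≠ 0) : M ∈ matLT ord I := by
  have hle : antidiagExp m n d r c ≤ expOf M := (antidiagExp_le hr.injective _).2 hM
  have hmem : MvPolynomial.monomial (antidiagExp m n d r c) (1 : ℂ) ∈ initialIdeal ord I :=
    Ideal.subset_span ⟨_, hI, _, isAntidiagonal hord _ r c hr hc, rfl⟩
  have := Ideal.mul_mem_left _ (MvPolynomial.monomial (expOf M - antidiagExp m n d r c) (1 : ℂ)) hmem
  rw [MvPolynomial.monomial_mul, one_mul, tsub_add_cancel_of_le hle] at this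
  exact this
end KD

namespace KD
open GCS

lemma lastUnmatched_split {β : Type} (cl op : ℕ) (w : List (ℕ × β)) :
    ∀ (o : ℕ) (x : β), lastUnmatched cl op w o = some x →
      ∃ w1 w2, w = w1 ++ (cl, x) :: w2 ∧ lastUnmatched cl op w2 0 = none := by
  induction w with
  | nil => intro o x h; simp [lastUnmatched] at h
  | cons p rest ih =>
    obtain ⟨a, lbl⟩ := p
    intro o x h
    have lift : ∀ o', lastUnmatched cl op rest o' = some x →
        ∃ w1 w2, (a, lbl) :: rest = w1 ++ (cl, x) :: w2 ∧ lastUnmatched cl op w2 0 = none := by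
      intro o' h'
      obtain ⟨w1, w2, e, hn⟩ := ih o' x h'
      exact ⟨(a, lbl) :: w1, w2, by rw [e]; rfl, hn⟩
    unfold lastUnmatched at h
    split_ifs at h with h1 h2 h3
    · cases hh : lastUnmatched cl op rest 0 with
      | some y => rw [hh] at h; exact lift 0 (by rw [hh]; exact h)
      | none =>
        rw [hh] at h
        simp only [Option.some.injEq] at h
        exact ⟨[], rest, by simp [h1, h], hh⟩
    · exact lift _ h
    · exact lift _ h
    · exact lift _ h

lemma lastUnmatched_none {β : Type} (cl op : ℕ) (u1 u2 : List (ℕ × β)) (y : β)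
    (h : lastUnmatched cl op (u1 ++ (cl, y) :: u2) 0 = none) : ∃ z, (op, z) ∈ u1 := by
  induction u1 with
  | nil =>
    simp only [List.nil_append] at h
    unfold lastUnmatched at h
    simp only [if_true] at h
    cases hh : lastUnmatched cl op u2 0 <;> simp [hh] at h
  | cons p rest ih =>
    obtain ⟨a, lbl⟩ := p
    simp only [List.cons_append] at h
    unfold lastUnmatched at h
    by_cases h3 : a = op
    · exact ⟨lbl, by simp [h3]⟩
    split_ifs at h with h1
    · cases hh : lastUnmatched cl op (rest ++ (cl, y) :: u2) 0 <;> simp [hh] at h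
    all_goals
      obtain ⟨z, hz⟩ := ih h
      exact ⟨z, List.mem_cons_of_mem _ hz⟩

/-- The reading order on labelled letters. -/
def RdOrd {n : ℕ} (p q : ℕ × Fin n) : Prop := p.2 < q.2 ∨ (p.2 = q.2 ∧ p.1 ≤ q.1)

lemma mem_rowWordLbl {m n : ℕ} (M : Matrix (Fin m) (Fin n) ℕ) (a : ℕ) (c : Fin n) :
    (a, c) ∈ rowWordLbl M ↔ ∃ r : Fin m, a = r.1 + 1 ∧ M r c ≠ 0 := by
  unfold rowWordLbl
  simp only [List.mem_flatMap, List.mem_finRange, true_and, List.mem_replicate, Prod.mk.injEq]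
  constructor
  · rintro ⟨c', r, h0, h1, rfl⟩
    exact ⟨r, h1, h0⟩
  · rintro ⟨r, h1, h0⟩
    exact ⟨c, r, h0, h1, rfl⟩

lemma rowWordLbl_pairwise {m n : ℕ} (M : Matrix (Fin m) (Fin n) ℕ) :
    (rowWordLbl M).Pairwise RdOrd := by
  unfold rowWordLbl
  rw [List.pairwise_flatMap]
  refine ⟨fun c _ => ?_, ?_⟩
  · rw [List.pairwise_flatMap]
    refine ⟨fun r _ => ?_, ?_⟩
    · rw [List.pairwise_replicate]
      exact Or.inr (Or.inr ⟨rfl, le_rfl⟩)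
    · refine (List.pairwise_lt_finRange m).imp ?_
      intro r1 r2 h x hx y hy
      rw [List.mem_replicate] at hx hy
      rw [hx.2, hy.2]
      exact Or.inr ⟨rfl, by simp only; have : r1.1 < r2.1 := h; omega⟩
  · refine (List.pairwise_lt_finRange n).imp ?_
    intro c1 c2 h x hx y hy
    simp only [List.mem_flatMap, List.mem_replicate] at hx hy
    obtain ⟨_, _, _, hx⟩ := hx
    obtain ⟨_, _, _, hy⟩ := hy
    rw [hx, hy]
    exact Or.inl h

lemma word_gen {β : Type} {cl op : ℕ} {w : List (ℕ × β)} {R : ℕ × β → ℕ × β → Prop}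
    (hw : w.Pairwise R) {x : β} (h : lastUnmatched cl op w 0 = some x) :
    (cl, x) ∈ w ∧ ∀ y, (cl, y) ∈ w → ¬ R (cl, y) (cl, x) → y ≠ x →
      ∃ z, (op, z) ∈ w ∧ R (cl, x) (op, z) ∧ R (op, z) (cl, y) := by
  obtain ⟨w1, w2, rfl, hn⟩ := lastUnmatched_split cl op w 0 x h
  refine ⟨by simp, fun y hy hR hne => ?_⟩
  rw [List.pairwise_append] at hw
  obtain ⟨_, hw2, hw12⟩ := hw
  rw [List.pairwise_cons] at hw2
  have hy2 : (cl, y) ∈ w2 := by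
    rw [List.mem_append, List.mem_cons] at hy
    rcases hy with hy | hy | hy
    · exact absurd (hw12 _ hy _ (by simp)) hR
    · exact absurd (Prod.mk.inj hy).2 hne
    · exact hy
  obtain ⟨u1, u2, rfl⟩ := List.append_of_mem hy2
  obtain ⟨z, hz⟩ := lastUnmatched_none cl op u1 u2 y hn
  have h2 := hw2.2
  rw [List.pairwise_append] at h2
  exact ⟨z, by simp [hz], hw2.1 _ (by simp [hz]), h2.2.2 _ hz _ (by simp)⟩

lemma word_f {m n : ℕ} (M : Matrix (Fin m) (Fin n) ℕ) (i : ℕ) (u v : Fin m)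
    (hu : u.1 + 1 = i) (hv : v.1 = i) (x : Fin n)
    (h : lastUnmatched i (i + 1) (rowWordLbl M) 0 = some x) :
    M u x ≠ 0 ∧ ∀ y, x < y → M u y ≠ 0 → ∃ z, x ≤ z ∧ z < y ∧ M v z ≠ 0 := by
  obtain ⟨h1, h2⟩ := word_gen (rowWordLbl_pairwise M) h
  have key : ∀ (w : Fin m) (a : ℕ) y, a = w.1 + 1 → (a, y) ∈ rowWordLbl M → M w y ≠ 0 := by
    intro w a y ha hy
    obtain ⟨r, hr, h0⟩ := (mem_rowWordLbl M _ _).1 hy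
    have : r = w := Fin.ext (by omega)
    rwa [this] at h0
  refine ⟨key u i x hu.symm h1, fun y hxy hy => ?_⟩
  obtain ⟨z, hz, r1, r2⟩ := h2 y ((mem_rowWordLbl M _ _).2 ⟨u, hu.symm, hy⟩)
    (by simp only [RdOrd]; rintro (h | ⟨h, _⟩)
        · exact absurd h hxy.not_gt
        · exact hxy.ne' h) hxy.ne'
  refine ⟨z, ?_, ?_, key v (i + 1) z (by omega) hz⟩
  · rcases r1 with h | ⟨h, _⟩
    · exact le_of_lt h
    · exact le_of_eq h
  · rcases r2 with h | ⟨_, h⟩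
    · exact h
    · simp only at h; omega

lemma word_e {m n : ℕ} (M : Matrix (Fin m) (Fin n) ℕ) (i : ℕ) (u v : Fin m)
    (hu : u.1 + 1 = i) (hv : v.1 = i) (x : Fin n)
    (h : lastUnmatched (i + 1) i (rowWordLbl M).reverse 0 = some x) :
    M v x ≠ 0 ∧ ∀ y, y < x → M v y ≠ 0 → ∃ z, y < z ∧ z ≤ x ∧ M u z ≠ 0 := by
  obtain ⟨h1, h2⟩ := word_gen (List.pairwise_reverse.2 (rowWordLbl_pairwise M)) h
  have key : ∀ (w : Fin m) (a : ℕ) y, a = w.1 + 1 → (a, y) ∈ (rowWordLbl M).reverse →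
      M w y ≠ 0 := by
    intro w a y ha hy
    obtain ⟨r, hr, h0⟩ := (mem_rowWordLbl M _ _).1 (List.mem_reverse.1 hy)
    have : r = w := Fin.ext (by omega)
    rwa [this] at h0
  refine ⟨key v (i + 1) x (by omega) h1, fun y hxy hy => ?_⟩
  obtain ⟨z, hz, r1, r2⟩ := h2 y
    (List.mem_reverse.2 ((mem_rowWordLbl M _ _).2 ⟨v, by omega, hy⟩))
    (by simp only [RdOrd]; rintro (h | ⟨h, _⟩)
        · exact absurd h hxy.not_gt
        · exact hxy.ne' h) hxy.ne
  refine ⟨z, ?_, ?_, key u i z (by omega) hz⟩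
  · rcases r2 with h | ⟨_, h⟩
    · exact h
    · simp only at h; omega
  · rcases r1 with h | ⟨h, _⟩
    · exact le_of_lt h
    · exact le_of_eq h

/-- The outcome of exchanging an antidiagonal chain. -/
def Out {p q d : ℕ} (M : Matrix (Fin p) (Fin q) ℕ) (i : ℕ)
    (r : Fin d → Fin p) (s : Fin d → Fin q) : Prop :=
  ∃ r' s', StrictMono r' ∧ StrictAnti s' ∧ (∀ x, M (r' x) (s' x) ≠ 0) ∧
    ((r' = r ∧ ∀ x, ∃ y z, s y ≤ s' x ∧ s' x ≤ s z) ∨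
     (s' = s ∧ ∃ x0 v, r' = Function.update r x0 v ∧
        (((r x0).1 = i ∧ v.1 + 1 = i) ∨ ((r x0).1 + 1 = i ∧ v.1 = i))))

lemma strictMono_update {d p : ℕ} {r : Fin d → Fin p} (hr : StrictMono r) (x0 : Fin d)
    (v : Fin p) (h1 : ∀ x, x < x0 → r x < v) (h2 : ∀ x, x0 < x → v < r x) :
    StrictMono (Function.update r x0 v) := by
  intro x y hxy
  by_cases hx : x = x0
  · subst hx
    rw [Function.update_self, Function.update_of_ne hxy.ne']
    exact h2 _ hxy
  · by_cases hy : y = x0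
    · subst hy
      rw [Function.update_self, Function.update_of_ne hx]
      exact h1 _ hxy
    · rw [Function.update_of_ne hx, Function.update_of_ne hy]
      exact hr hxy

lemma strictAnti_update {d p : ℕ} {r : Fin d → Fin p} (hr : StrictAnti r) (x0 : Fin d)
    (v : Fin p) (h1 : ∀ x, x < x0 → v < r x) (h2 : ∀ x, x0 < x → r x < v) :
    StrictAnti (Function.update r x0 v) := by
  intro x y hxy
  by_cases hx : x = x0
  · subst hx
    rw [Function.update_self, Function.update_of_ne hxy.ne']
    exact h2 _ hxy
  · by_cases hy : y = x0
    · subst hy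
      rw [Function.update_self, Function.update_of_ne hx]
      exact h1 _ hxy
    · rw [Function.update_of_ne hx, Function.update_of_ne hy]
      exact hr hxy

lemma out_self {p q d : ℕ} {M : Matrix (Fin p) (Fin q) ℕ} {i : ℕ}
    {r : Fin d → Fin p} {s : Fin d → Fin q} (hr : StrictMono r) (hs : StrictAnti s)
    (h : ∀ x, M (r x) (s x) ≠ 0) : Out M i r s :=
  ⟨r, s, hr, hs, h, Or.inl ⟨rfl, fun x => ⟨x, x, le_rfl, le_rfl⟩⟩⟩

lemma out_col {p q d : ℕ} {M : Matrix (Fin p) (Fin q) ℕ} {i : ℕ}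
    {r : Fin d → Fin p} {s : Fin d → Fin q} (hr : StrictMono r)
    (x0 : Fin d) (c' : Fin q) (hs : StrictAnti (Function.update s x0 c'))
    (h : ∀ x, x ≠ x0 → M (r x) (s x) ≠ 0) (h0 : M (r x0) c' ≠ 0)
    (hb : ∃ y z, s y ≤ c' ∧ c' ≤ s z) : Out M i r s := by
  refine ⟨r, _, hr, hs, fun x => ?_, Or.inl ⟨rfl, fun x => ?_⟩⟩
  · by_cases hx : x = x0
    · subst hx; rwa [Function.update_self]
    · rw [Function.update_of_ne hx]; exact h x hx
  · by_cases hx : x = x0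
    · subst hx; rwa [Function.update_self]
    · rw [Function.update_of_ne hx]; exact ⟨x, x, le_rfl, le_rfl⟩

lemma out_row {p q d : ℕ} {M : Matrix (Fin p) (Fin q) ℕ} {i : ℕ}
    {r : Fin d → Fin p} {s : Fin d → Fin q} (hs : StrictAnti s)
    (x0 : Fin d) (v : Fin p) (hr : StrictMono (Function.update r x0 v))
    (h : ∀ x, x ≠ x0 → M (r x) (s x) ≠ 0) (h0 : M v (s x0) ≠ 0)
    (hb : ((r x0).1 = i ∧ v.1 + 1 = i) ∨ ((r x0).1 + 1 = i ∧ v.1 = i)) : Out M i r s := by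
  refine ⟨_, s, hr, hs, fun x => ?_, Or.inr ⟨rfl, x0, v, rfl, hb⟩⟩
  by_cases hx : x = x0
  · subst hx; rwa [Function.update_self]
  · rw [Function.update_of_ne hx]; exact h x hx

lemma out_f {p q d : ℕ} {M N : Matrix (Fin p) (Fin q) ℕ} {i : ℕ} (hi : 0 < i) (hip : i < p)
    (hf : frow i M = some N)
    {r : Fin d → Fin p} {s : Fin d → Fin q} (hr : StrictMono r) (hs : StrictAnti s)
    (hN : ∀ x, N (r x) (s x) ≠ 0) : Out M i r s := by
  unfold frow at hf
  rw [Option.map_eq_some_iff] at hf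
  obtain ⟨c0, hc0, rfl⟩ := hf
  obtain ⟨u, hu⟩ : ∃ u : Fin p, u.1 + 1 = i := ⟨⟨i - 1, by omega⟩, by simp; omega⟩
  obtain ⟨v, hv⟩ : ∃ v : Fin p, v.1 = i := ⟨⟨i, hip⟩, rfl⟩
  obtain ⟨hu0, hw⟩ := word_f M i u v hu hv c0 hc0
  have hle : ∀ x, ¬ (r x = v ∧ s x = c0) → M (r x) (s x) ≠ 0 := by
    intro x hx h0
    have := hN x
    simp only [Matrix.of_apply] at this
    split_ifs at this with h1 h2
    · omega
    · exact hx ⟨Fin.ext (by omega), h2.2⟩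
    · exact this h0
  by_cases hex : ∃ x0, M (r x0) (s x0) = 0
  swap
  · push Not at hex
    exact out_self hr hs hex
  obtain ⟨x0, hx0⟩ := hex
  have hx0' : r x0 = v ∧ s x0 = c0 := by
    by_contra h; exact hle x0 h hx0
  have hle' : ∀ x, x ≠ x0 → M (r x) (s x) ≠ 0 := by
    intro x hx
    exact hle x fun h => hx (hr.injective (h.1.trans hx0'.1.symm))
  by_cases hrow : ∃ x1, r x1 = u
  · obtain ⟨x1, hx1⟩ := hrow
    have h10 : x1 < x0 := hr.lt_iff_lt.1 (by rw [hx1, hx0'.1, Fin.lt_def]; omega)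
    have hlt : s x0 < s x1 := hs h10
    obtain ⟨z, hz1, hz2, hz3⟩ := hw (s x1) (by rw [← hx0'.2]; exact hlt)
      (by rw [← hx1]; exact hle' x1 h10.ne)
    refine out_col hr x0 z (strictAnti_update hs x0 z ?_ ?_) hle' (by rw [hx0'.1]; exact hz3)
      ⟨x0, x1, by rw [hx0'.2]; exact hz1, hz2.le⟩
    · intro x hx
      have : r x < r x0 := hr hx
      have : x ≤ x1 := hr.le_iff_le.1 (by
        rw [hx1, Fin.le_def]; rw [hx0'.1, Fin.lt_def] at this; omega)
      exact lt_of_lt_of_le hz2 (hs.antitone this)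
    · intro x hx
      exact lt_of_lt_of_le (hs hx) (by rw [hx0'.2]; exact hz1)
  · refine out_row hs x0 u (strictMono_update hr x0 u ?_ ?_) hle' (by rw [hx0'.2]; exact hu0)
      (Or.inl ⟨by rw [hx0'.1, hv], hu⟩)
    · intro x hx
      have h1 : r x < r x0 := hr hx
      have h2 : r x ≠ u := fun h => hrow ⟨x, h⟩
      rw [hx0'.1, Fin.lt_def] at h1
      rw [Ne, Fin.ext_iff] at h2
      rw [Fin.lt_def]; omega
    · intro x hx
      have h1 : r x0 < r x := hr hx
      rw [hx0'.1, Fin.lt_def] at h1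
      rw [Fin.lt_def]; omega

lemma out_e {p q d : ℕ} {M N : Matrix (Fin p) (Fin q) ℕ} {i : ℕ} (hi : 0 < i) (hip : i < p)
    (hf : erow i M = some N)
    {r : Fin d → Fin p} {s : Fin d → Fin q} (hr : StrictMono r) (hs : StrictAnti s)
    (hN : ∀ x, N (r x) (s x) ≠ 0) : Out M i r s := by
  unfold erow at hf
  rw [Option.map_eq_some_iff] at hf
  obtain ⟨c0, hc0, rfl⟩ := hf
  obtain ⟨u, hu⟩ : ∃ u : Fin p, u.1 + 1 = i := ⟨⟨i - 1, by omega⟩, by simp; omega⟩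
  obtain ⟨v, hv⟩ : ∃ v : Fin p, v.1 = i := ⟨⟨i, hip⟩, rfl⟩
  obtain ⟨hu0, hw⟩ := word_e M i u v hu hv c0 hc0
  have hle : ∀ x, ¬ (r x = u ∧ s x = c0) → M (r x) (s x) ≠ 0 := by
    intro x hx h0
    have := hN x
    simp only [Matrix.of_apply] at this
    split_ifs at this with h1 h2
    · omega
    · exact hx ⟨Fin.ext (by omega), h2.2⟩
    · exact this h0
  by_cases hex : ∃ x0, M (r x0) (s x0) = 0
  swap
  · push Not at hex
    exact out_self hr hs hex
  obtain ⟨x0, hx0⟩ := hex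
  have hx0' : r x0 = u ∧ s x0 = c0 := by
    by_contra h; exact hle x0 h hx0
  have hle' : ∀ x, x ≠ x0 → M (r x) (s x) ≠ 0 := by
    intro x hx
    exact hle x fun h => hx (hr.injective (h.1.trans hx0'.1.symm))
  by_cases hrow : ∃ x1, r x1 = v
  · obtain ⟨x1, hx1⟩ := hrow
    have h10 : x0 < x1 := hr.lt_iff_lt.1 (by rw [hx1, hx0'.1, Fin.lt_def]; omega)
    have hlt : s x1 < s x0 := hs h10
    obtain ⟨z, hz1, hz2, hz3⟩ := hw (s x1) (by rw [← hx0'.2]; exact hlt)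
      (by rw [← hx1]; exact hle' x1 h10.ne')
    refine out_col hr x0 z (strictAnti_update hs x0 z ?_ ?_) hle' (by rw [hx0'.1]; exact hz3)
      ⟨x1, x0, hz1.le, by rw [hx0'.2]; exact hz2⟩
    · intro x hx
      exact lt_of_le_of_lt (by rw [hx0'.2]; exact hz2) (hs hx)
    · intro x hx
      have : r x0 < r x := hr hx
      have : x1 ≤ x := hr.le_iff_le.1 (by
        rw [hx1, Fin.le_def]; rw [hx0'.1, Fin.lt_def] at this; omega)
      exact lt_of_le_of_lt (hs.antitone this) hz1
  · refine out_row hs x0 v (strictMono_update hr x0 v ?_ ?_) hle' (by rw [hx0'.2]; exact hu0)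
      (Or.inr ⟨by rw [hx0'.1, hu], hv⟩)
    · intro x hx
      have h1 : r x < r x0 := hr hx
      rw [hx0'.1, Fin.lt_def] at h1
      rw [Fin.lt_def]; omega
    · intro x hx
      have h1 : r x0 < r x := hr hx
      have h2 : r x ≠ v := fun h => hrow ⟨x, h⟩
      rw [hx0'.1, Fin.lt_def] at h1
      rw [Ne, Fin.ext_iff] at h2
      rw [Fin.lt_def]; omega

lemma sameBlock_adj {I : Finset ℕ} {i x y : ℕ} (hi : i ∉ I)
    (h : (x = i ∧ y + 1 = i) ∨ (x + 1 = i ∧ y = i)) : SameBlock I x y := by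
  intro k hk
  have : k ≠ i := fun e => hi (e ▸ hk)
  omega

lemma inLevi_one {m : ℕ} (I : Finset ℕ) : InLevi I (1 : Matrix (Fin m) (Fin m) ℂ) := by
  refine ⟨isUnit_one, fun a b hab => ?_⟩
  rw [Matrix.one_apply_ne]
  rintro rfl
  exact hab fun _ _ => Iff.rfl

lemma inLevi_transvection {m : ℕ} {I : Finset ℕ} {u v : Fin m} (huv : u ≠ v)
    (h : SameBlock I u.1 v.1) : InLevi I (Matrix.transvection u v (1 : ℂ)) := by
  refine ⟨?_, fun a b hab => ?_⟩
  · rw [Matrix.isUnit_iff_isUnit_det, Matrix.det_transvection_of_ne _ _ huv]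
    exact isUnit_one
  · have h1 : a ≠ b := by rintro rfl; exact hab fun _ _ => Iff.rfl
    rw [Matrix.transvection, Matrix.add_apply, Matrix.one_apply_ne h1, zero_add,
      Matrix.single_apply_of_ne]
    rintro ⟨rfl, rfl⟩
    exact hab h

lemma leviAct_row {m n : ℕ} (u v : Fin m) (p : Fin m) (q : Fin n) :
    leviAct (Matrix.transvection u v (1 : ℂ)) (1 : Matrix (Fin n) (Fin n) ℂ)
      (MvPolynomial.X (p, q)) =
    MvPolynomial.X (p, q) + if p = u then MvPolynomial.X (v, q) else 0 := by
  classical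
  simp only [leviAct, MvPolynomial.aeval_X, Matrix.transvection, Matrix.add_apply,
    Matrix.one_apply, Matrix.single_apply, mul_ite, mul_one, mul_zero, apply_ite MvPolynomial.C,
    MvPolynomial.C_0, ite_mul, zero_mul, Finset.sum_ite_eq, Finset.mem_univ, if_true,
    MvPolynomial.C_add, add_mul, Finset.sum_add_distrib, MvPolynomial.C_1, one_mul]
  congr 1
  by_cases h : p = u
  · subst h; simp
  · simp [h, Ne.symm h]

lemma leviAct_col {m n : ℕ} (u v : Fin n) (p : Fin m) (q : Fin n) :
    leviAct (1 : Matrix (Fin m) (Fin m) ℂ) (Matrix.transvection u v (1 : ℂ))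
      (MvPolynomial.X (p, q)) =
    MvPolynomial.X (p, q) + if q = u then MvPolynomial.X (p, v) else 0 := by
  classical
  have : ∀ c d, (1 : Matrix (Fin m) (Fin m) ℂ) p c * Matrix.transvection u v (1 : ℂ) q d =
      if p = c then Matrix.transvection u v (1 : ℂ) q d else 0 := by
    intro c d; rw [Matrix.one_apply]; split_ifs <;> simp
  simp only [leviAct, MvPolynomial.aeval_X, this]
  rw [Finset.sum_comm]
  simp only [Matrix.transvection, Matrix.add_apply,
    Matrix.one_apply, Matrix.single_apply, mul_ite, mul_one, mul_zero, apply_ite MvPolynomial.C,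
    MvPolynomial.C_0, ite_mul, zero_mul, Finset.sum_ite_eq, Finset.mem_univ, if_true,
    MvPolynomial.C_add, add_mul, Finset.sum_add_distrib, MvPolynomial.C_1, one_mul]
  congr 1
  by_cases h : q = u
  · subst h; simp
  · simp [h, Ne.symm h]

lemma stable_row {m n d : ℕ} {I J : Finset ℕ} {Idl : Ideal (MvPolynomial (Fin m × Fin n) ℂ)}
    (hst : LeviStable I J Idl) {r : Fin d → Fin m} {c : Fin d → Fin n} (hr : StrictMono r)
    (hmem : genMinor m n d r c ∈ Idl) (x0 : Fin d) (v : Fin m) (hne : r x0 ≠ v)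
    (hb : SameBlock I (r x0).1 v.1) : genMinor m n d (Function.update r x0 v) c ∈ Idl := by
  have h := hst _ _ (inLevi_transvection hne hb) (inLevi_one J) _ hmem
  have e : leviAct (Matrix.transvection (r x0) v (1 : ℂ)) (1 : Matrix (Fin n) (Fin n) ℂ)
      (genMinor m n d r c) = genMinor m n d r c + genMinor m n d (Function.update r x0 v) c := by
    unfold genMinor
    rw [AlgHom.map_det]
    set A : Matrix (Fin d) (Fin d) (MvPolynomial (Fin m × Fin n) ℂ) :=
      Matrix.of fun i j => MvPolynomial.X (r i, c j) with hA
    have e1 : A = A.updateRow x0 (fun j => MvPolynomial.X (r x0, c j)) := by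
      ext1 i j
      by_cases hi : i = x0
      · subst hi; simp [hA]
      · simp [hA, Matrix.updateRow_ne hi]
    have e2 : (Matrix.of fun i j : Fin d =>
        (MvPolynomial.X (Function.update r x0 v i, c j) : MvPolynomial (Fin m × Fin n) ℂ)) =
        A.updateRow x0 (fun j => MvPolynomial.X (v, c j)) := by
      ext1 i j
      by_cases hi : i = x0
      · subst hi; simp
      · simp [hA, Matrix.updateRow_ne hi, Function.update_of_ne hi]
    rw [e2]
    conv_rhs => enter [1]; rw [e1]
    rw [← Matrix.det_updateRow_add]
    congr 1
    ext1 i j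
    rw [AlgHom.mapMatrix_apply, Matrix.map_apply, hA, Matrix.of_apply, leviAct_row]
    by_cases hi : i = x0
    · subst hi; simp
    · rw [if_neg (fun h => hi (hr.injective h)), Matrix.updateRow_ne hi, add_zero]
      rfl
  rw [e] at h
  exact (Ideal.add_mem_iff_right _ hmem).1 h

lemma stable_col {m n d : ℕ} {I J : Finset ℕ} {Idl : Ideal (MvPolynomial (Fin m × Fin n) ℂ)}
    (hst : LeviStable I J Idl) {r : Fin d → Fin m} {c : Fin d → Fin n} (hc : StrictMono c)
    (hmem : genMinor m n d r c ∈ Idl) (x0 : Fin d) (v : Fin n) (hne : c x0 ≠ v)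
    (hb : SameBlock J (c x0).1 v.1) : genMinor m n d r (Function.update c x0 v) ∈ Idl := by
  have h := hst _ _ (inLevi_one I) (inLevi_transvection hne hb) _ hmem
  have e : leviAct (1 : Matrix (Fin m) (Fin m) ℂ) (Matrix.transvection (c x0) v (1 : ℂ))
      (genMinor m n d r c) = genMinor m n d r c + genMinor m n d r (Function.update c x0 v) := by
    unfold genMinor
    rw [AlgHom.map_det]
    set A : Matrix (Fin d) (Fin d) (MvPolynomial (Fin m × Fin n) ℂ) :=
      Matrix.of fun i j => MvPolynomial.X (r i, c j) with hA
    have e1 : A = A.updateCol x0 (fun j => MvPolynomial.X (r j, c x0)) := by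
      ext1 i j
      by_cases hi : j = x0
      · subst hi; simp [hA]
      · simp [hA, Matrix.updateCol_ne hi]
    have e2 : (Matrix.of fun i j : Fin d =>
        (MvPolynomial.X (r i, Function.update c x0 v j) : MvPolynomial (Fin m × Fin n) ℂ)) =
        A.updateCol x0 (fun j => MvPolynomial.X (r j, v)) := by
      ext1 i j
      by_cases hi : j = x0
      · subst hi; simp
      · simp [hA, Matrix.updateCol_ne hi, Function.update_of_ne hi]
    rw [e2]
    conv_rhs => enter [1]; rw [e1]
    rw [← Matrix.det_updateCol_add]
    congr 1
    ext1 i j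
    rw [AlgHom.mapMatrix_apply, Matrix.map_apply, hA, Matrix.of_apply, leviAct_col]
    by_cases hi : j = x0
    · subst hi; simp
    · rw [if_neg (fun h => hi (hc.injective h)), Matrix.updateCol_ne hi, add_zero]
      rfl
  rw [e] at h
  exact (Ideal.add_mem_iff_right _ hmem).1 h

lemma bicrystal {m n k : ℕ} {a a' b b' d : Fin k → ℕ}
    (hbnd : ∀ i, 1 ≤ a i ∧ a i ≤ a' i ∧ a' i ≤ m ∧ 1 ≤ b i ∧ b i ≤ b' i ∧ b' i ≤ n)
    (hform : ∀ i, (a i = 1 ∧ b i = 1) ∨ (a' i = m ∧ b' i = n) ∨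
      (a i = 1 ∧ a' i = m) ∨ (b i = 1 ∧ b' i = n))
    {ord : TermOrder (Fin m × Fin n)} (hord : IsAntidiagLex m n ord) {I J : Finset ℕ}
    (hst : LeviStable I J (Ideal.span
      (⋃ i, minorsOfSub m n (a i) (a' i) (b i) (b' i) (d i)))) :
    BicrystalClosed m n I J {M | M ∉ matLT ord (Ideal.span
      (⋃ i, minorsOfSub m n (a i) (a' i) (b i) (b' i) (d i)))} := by
  intro φ hφ M hM N hN hNI
  apply hM
  obtain ⟨t, r, c, ⟨hr, hc, hrb, hcb⟩, hne⟩ := matLT_iff hbnd hform hord hNI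
  have hgen : ∀ (r : Fin (d t) → Fin m) (c : Fin (d t) → Fin n), StrictMono r → StrictMono c →
      (∀ i, a t ≤ (r i).1 + 1 ∧ (r i).1 + 1 ≤ a' t) →
      (∀ j, b t ≤ (c j).1 + 1 ∧ (c j).1 + 1 ≤ b' t) →
      genMinor m n (d t) r c ∈ Ideal.span
        (⋃ i, minorsOfSub m n (a i) (a' i) (b i) (b' i) (d i)) := by
    intro r c h1 h2 h3 h4
    exact Ideal.subset_span (Set.mem_iUnion.2 ⟨t, r, c, h1, h2, h3, h4, rfl⟩)
  rcases hφ with ⟨i, hi, him, hiI, hor⟩ | ⟨j, hj, hjn, hjJ, hor⟩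
  · have hs : StrictAnti fun x : Fin (d t) => c x.rev := fun x y h => hc (Fin.rev_lt_rev.2 h)
    have hout : Out M i r (fun x => c x.rev) := by
      rcases hor with rfl | rfl
      · exact out_f hi him hN hr hs hne
      · exact out_e hi him hN hr hs hne
    obtain ⟨r', s', hr', hs', hM', hcase⟩ := hout
    have hc' : StrictMono fun x : Fin (d t) => s' x.rev :=
      fun x y h => hs' (Fin.rev_lt_rev.2 h)
    refine matLT_of hord hr' hc' ?_ (fun x => by simpa using hM' x)
    rcases hcase with ⟨rfl, hb⟩ | ⟨rfl, x0, v, rfl, hadj⟩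
    · refine hgen _ _ hr' hc' hrb fun x => ?_
      obtain ⟨y, z, h1, h2⟩ := hb x.rev
      have h1' : (c y.rev).1 ≤ (s' x.rev).1 := h1
      have h2' : (s' x.rev).1 ≤ (c z.rev).1 := h2
      have h3 := hcb y.rev
      have h4 := hcb z.rev
      show b t ≤ (s' x.rev).1 + 1 ∧ (s' x.rev).1 + 1 ≤ b' t
      omega
    · simp only [Fin.rev_rev]
      refine stable_row hst hr (hgen r c hr hc hrb hcb) x0 v ?_ (sameBlock_adj hiI hadj)
      rw [Ne, Fin.ext_iff]; omega
  · have hs : StrictAnti fun x : Fin (d t) => r x.rev := fun x y h => hr (Fin.rev_lt_rev.2 h)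
    have hout : Out M.transpose j c (fun x => r x.rev) := by
      rcases hor with rfl | rfl
      · unfold fcol at hN
        rw [Option.map_eq_some_iff] at hN
        obtain ⟨N', hN', rfl⟩ := hN
        exact out_f hj hjn hN' hc hs fun x => by simpa using hne x.rev
      · unfold ecol at hN
        rw [Option.map_eq_some_iff] at hN
        obtain ⟨N', hN', rfl⟩ := hN
        exact out_e hj hjn hN' hc hs fun x => by simpa using hne x.rev
    obtain ⟨c', s', hc', hs', hM', hcase⟩ := hout
    have hr' : StrictMono fun x : Fin (d t) => s' x.rev :=
      fun x y h => hs' (Fin.rev_lt_rev.2 h)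
    refine matLT_of hord hr' hc' ?_ (fun x => hM' x.rev)
    rcases hcase with ⟨rfl, hb⟩ | ⟨rfl, x0, v, rfl, hadj⟩
    · refine hgen _ _ hr' hc' (fun x => ?_) hcb
      obtain ⟨y, z, h1, h2⟩ := hb x.rev
      have h1' : (r y.rev).1 ≤ (s' x.rev).1 := h1
      have h2' : (s' x.rev).1 ≤ (r z.rev).1 := h2
      have h3 := hrb y.rev
      have h4 := hrb z.rev
      show a t ≤ (s' x.rev).1 + 1 ∧ (s' x.rev).1 + 1 ≤ a' t
      omega
    · simp only [Fin.rev_rev]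
      refine stable_col hst hc (hgen r c hr hc hrb hcb) x0 v ?_ (sameBlock_adj hjJ hadj)
      rw [Ne, Fin.ext_iff]; omega

end KD

open GCS in
/-- Theorem `knutsonbicrystal`: for a Knutson determinantal ideal
(each defining submatrix is northwest-justified, southeast-justified, a set of consecutive
columns, or a set of consecutive rows), the defining minors form a Gröbner basis with
respect to the antidiagonal lexicographic order determined by
`z_{1n} ≻ ⋯ ≻ z_{11} ≻ z_{2n} ≻ ⋯ ≻ z_{m1}`, and consequently the ideal is
`(𝐈,𝐉,≺)`-bicrystalline for every Levi datum under which it is stable. -/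
theorem knutsonDeterminantal_groebner_and_bicrystalline
    (m n k : ℕ) (a a' b b' d : Fin k → ℕ) (hd : ∀ i, 0 < d i)
    (hbnd : ∀ i, 1 ≤ a i ∧ a i ≤ a' i ∧ a' i ≤ m ∧ 1 ≤ b i ∧ b i ≤ b' i ∧ b' i ≤ n)
    (hform : ∀ i, (a i = 1 ∧ b i = 1) ∨ (a' i = m ∧ b' i = n) ∨
      (a i = 1 ∧ a' i = m) ∨ (b i = 1 ∧ b' i = n))
    (G : Set (MvPolynomial (Fin m × Fin n) ℂ))
    (hG : G = ⋃ i, minorsOfSub m n (a i) (a' i) (b i) (b' i) (d i))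
    (ord : TermOrder (Fin m × Fin n)) (hord : IsAntidiagLex m n ord) :
    IsGroebnerBasis ord (Ideal.span G) G ∧
    ∀ I J : Finset ℕ, IsLeviDatum m I → IsLeviDatum n J →
      LeviStable I J (Ideal.span G) →
      IsBicrystalline m n I J ord (Ideal.span G) := by
  refine ⟨KD.groebner hbnd hform hG hord, fun I J _ _ hst => ⟨hst, ?_⟩⟩
  subst hG
  exact KD.bicrystal hbnd hform hord hst
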